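/- arXiv:2002.04810 — 7 statements merged into one kernel-verified Lean document; each statement's English description precedes it below -/
import Mathlib

section
/- Let 1 ≤ a ≤ b be integers. There exists a bijection φ : J(𝓡(a,b)) → J(𝓣(a,b)) between the order ideals of the rectangle poset and the order ideals of the trapezoid poset that commutes with rowmotion, i.e. φ(row(I)) = row(φ(I)) for every order ideal I of 𝓡(a,b). In particular, rowmotion on J(𝓣(a,b)) has the same orbit structure as rowmotion on J(𝓡(a,b)). -/
/-!
STATEMENT 0: There exists a bijection φ between the order ideals of the rectangle
poset 𝓡(a,b) and those of the trapezoid poset 𝓣(a,b) commuting with rowmotion.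
-/

open scoped Classical

noncomputable section

namespace Stmt0

/-- The rectangle poset `𝓡(a,b) = {(i,j) : 1 ≤ i ≤ a, 1 ≤ j ≤ b}`,
as a finite subset of `ℤ × ℤ` with the componentwise order. -/
def rect (a b : ℤ) : Finset (ℤ × ℤ) := Finset.Icc (1, 1) (a, b)

/-- The trapezoid poset `𝓣(a,b) = {(i,j) : 1 ≤ i ≤ a, i ≤ j ≤ a+b-i}`,
as a finite subset of `ℤ × ℤ` with the componentwise order. -/
def trap (a b : ℤ) : Finset (ℤ × ℤ) :=
  (Finset.Icc (1, 1) (a, a + b - 1)).filter (fun p => p.1 ≤ p.2 ∧ p.2 ≤ a + b - p.1)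

/-- `I` is an order ideal of the poset with ground set `P ⊆ ℤ × ℤ`
(componentwise order): a downward-closed subset of `P`. -/
def IsIdeal (P I : Finset (ℤ × ℤ)) : Prop :=
  I ⊆ P ∧ ∀ x ∈ I, ∀ y ∈ P, y ≤ x → y ∈ I

/-- Rowmotion on order ideals of the poset with ground set `P`:
`row P I` is the order ideal generated by the minimal elements of `P \ I`. -/
def row (P I : Finset (ℤ × ℤ)) : Finset (ℤ × ℤ) :=
  P.filter (fun x => ∃ m ∈ P, m ∉ I ∧ (∀ y ∈ P, y ∉ I → y ≤ m → y = m) ∧ x ≤ m)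

/-! ### Local description of rowmotion -/

lemma row_eq_of_local (P I K : Finset (ℤ × ℤ)) (B : ℤ)
    (hup : ∀ x ∈ P, ∀ y ∈ P, x ≤ y → x ≠ y →
      ∃ z ∈ P, z ≤ y ∧ (z = (x.1 + 1, x.2) ∨ z = (x.1, x.2 + 1)))
    (hdn : ∀ x ∈ P, ∀ y ∈ P, x ≤ y → x ≠ y →
      ∃ z ∈ P, x ≤ z ∧ (z = (y.1 - 1, y.2) ∨ z = (y.1, y.2 - 1)))
    (hB : ∀ x ∈ P, x.1 + x.2 ≤ B)
    (hI : IsIdeal P I) (hKP : K ⊆ P)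
    (hK : ∀ i j, (i, j) ∈ P → ((i, j) ∈ K ↔
      ((i - 1, j) ∈ P → (i - 1, j) ∈ I) ∧ ((i, j - 1) ∈ P → (i, j - 1) ∈ I) ∧
      ((i, j) ∉ I ∨ (i + 1, j) ∈ K ∨ (i, j + 1) ∈ K))) :
    row P I = K := by
  have hrP : row P I ⊆ P := Finset.filter_subset _ _
  have mem_row : ∀ x, x ∈ row P I ↔ x ∈ P ∧ ∃ m ∈ P, m ∉ I ∧
      (∀ y ∈ P, y ∉ I → y ≤ m → y = m) ∧ x ≤ m := fun x => Finset.mem_filter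
  have hrow : ∀ i j, (i, j) ∈ P → ((i, j) ∈ row P I ↔
      ((i - 1, j) ∈ P → (i - 1, j) ∈ I) ∧ ((i, j - 1) ∈ P → (i, j - 1) ∈ I) ∧
      ((i, j) ∉ I ∨ (i + 1, j) ∈ row P I ∨ (i, j + 1) ∈ row P I)) := by
    intro i j hp
    constructor
    · intro h
      obtain ⟨-, m, hmP, hmI, hmin, hle⟩ := (mem_row _).1 h
      have hlow : ∀ q ∈ P, q ≤ (i, j) → q ≠ (i, j) → q ∈ I := by
        intro q hq hqle hne
        by_contra hqI
        have := hmin q hq hqI (hqle.trans hle)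
        subst this
        exact hne (le_antisymm hqle hle)
      refine ⟨fun h1 => hlow _ h1 (by simp [Prod.le_def]) (by simp),
        fun h1 => hlow _ h1 (by simp [Prod.le_def]) (by simp), ?_⟩
      by_cases hne : (i, j) = m
      · left; rw [hne]; exact hmI
      · right
        obtain ⟨z, hzP, hzm, hz⟩ := hup _ hp _ hmP hle hne
        have hzr : z ∈ row P I := (mem_row _).2 ⟨hzP, m, hmP, hmI, hmin, hzm⟩
        rcases hz with rfl | rfl
        · exact Or.inl hzr
        · exact Or.inr hzr
    · rintro ⟨h1, h2, h3⟩
      rcases h3 with h3 | h3 | h3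
      · refine (mem_row _).2 ⟨hp, (i, j), hp, h3, ?_, le_rfl⟩
        intro y hy hyI hyle
        by_contra hne
        obtain ⟨z, hzP, hyz, hz⟩ := hdn _ hy _ hp hyle hne
        have hzI : z ∈ I := by
          rcases hz with rfl | rfl
          · exact h1 hzP
          · exact h2 hzP
        exact hyI (hI.2 z hzI y hy hyz)
      · obtain ⟨-, m, hmP, hmI, hmin, hle⟩ := (mem_row _).1 h3
        exact (mem_row _).2 ⟨hp, m, hmP, hmI, hmin, le_trans (by simp [Prod.le_def]) hle⟩
      · obtain ⟨-, m, hmP, hmI, hmin, hle⟩ := (mem_row _).1 h3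
        exact (mem_row _).2 ⟨hp, m, hmP, hmI, hmin, le_trans (by simp [Prod.le_def]) hle⟩
  have key : ∀ k : ℕ, ∀ i j : ℤ, B - (i + j) < k → ((i, j) ∈ row P I ↔ (i, j) ∈ K) := by
    intro k
    induction k with
    | zero =>
      intro i j h
      have hn : (i, j) ∉ P := fun hp => by
        have := hB _ hp
        simp at this h
        omega
      exact ⟨fun h => absurd (hrP h) hn, fun h => absurd (hKP h) hn⟩
    | succ k ih =>
      intro i j h
      by_cases hp : (i, j) ∈ P
      · rw [hrow i j hp, hK i j hp, ih (i + 1) j (by push_cast at h; omega),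
          ih i (j + 1) (by push_cast at h; omega)]
      · exact ⟨fun h => absurd (hrP h) hp, fun h => absurd (hKP h) hp⟩
  ext ⟨i, j⟩
  exact key ((B - (i + j)).toNat + 1) i j (by push_cast; omega)

/-! ### Periodic words, encoded by their counting functions -/

def IsW (n a : ℤ) (D : ℤ → ℤ) : Prop :=
  D 0 = 0 ∧ (∀ p, D (p + 1) = D p ∨ D (p + 1) = D p + 1) ∧ ∀ p, D (p + n) = D p + a

def rotF (D : ℤ → ℤ) : ℤ → ℤ := fun p => D (p + 1) - D 1

lemma IsW.rot {n a : ℤ} {D : ℤ → ℤ} (h : IsW n a D) : IsW n a (rotF D) := by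
  obtain ⟨h0, h1, h2⟩ := h
  refine ⟨by simp [rotF], fun p => ?_, fun p => ?_⟩
  · have := h1 (p + 1)
    simp only [rotF]; omega
  · have := h2 (p + 1)
    have e : p + n + 1 = p + 1 + n := by ring
    simp only [rotF, e]; omega

lemma IsW.mono {n a : ℤ} {D : ℤ → ℤ} (h : IsW n a D) {x y : ℤ} (hxy : x ≤ y) :
    D x ≤ D y ∧ D y ≤ D x + (y - x) := by
  induction y, hxy using Int.leInduction with
  | base => simp
  | succ y hy ih =>
    have := h.2.1 y
    omega

lemma rotF_iter (D : ℤ → ℤ) (h0 : D 0 = 0) (k : ℕ) (p : ℤ) :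
    (rotF^[k] D) p = D (p + k) - D k := by
  induction k generalizing p with
  | zero => simp [h0]
  | succ k ih =>
    rw [Function.iterate_succ_apply']
    simp only [rotF, ih]
    push_cast
    have e : p + 1 + (k : ℤ) = p + (k + 1) := by ring
    have e2 : 1 + (k : ℤ) = k + 1 := by ring
    rw [e, e2]; ring

lemma IsW.period {n a : ℤ} {D : ℤ → ℤ} (h : IsW n a D) (k : ℕ) (p : ℤ) :
    D (p + k * n) = D p + k * a := by
  induction k with
  | zero => simp
  | succ k ih =>
    have e : p + ((k + 1 : ℕ) : ℤ) * n = p + k * n + n := by push_cast; ring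
    rw [e, h.2.2, ih]; push_cast; ring

lemma IsW.ext_of_pos {n a : ℤ} (hn : 1 ≤ n) {D D' : ℤ → ℤ} (h : IsW n a D) (h' : IsW n a D')
    (m : ℤ) (H : ∀ p, m ≤ p → D (p + 1) - D p = D' (p + 1) - D' p) : D = D' := by
  have H2 : ∀ p, D (p + 1) - D p = D' (p + 1) - D' p := by
    intro p
    have hk : m ≤ p + ((m - p).toNat : ℤ) * n := by nlinarith [Int.self_le_toNat (m - p)]
    have h3 := H _ hk
    have e : p + ((m - p).toNat : ℤ) * n + 1 = p + 1 + ((m - p).toNat : ℤ) * n := by ring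
    rw [e, h.period, h.period, h'.period, h'.period] at h3
    linarith
  funext p
  induction p using Int.induction_on with
  | zero => rw [h.1, h'.1]
  | succ i ih => have := H2 i; omega
  | pred i ih =>
    have := H2 (-i - 1)
    simp only [sub_add_cancel] at this
    omega

lemma exists_ext (n a : ℤ) (hn : 1 ≤ n) (c : ℤ → ℤ) (h0 : c 0 = 0) (hcn : c n = a)
    (hs : ∀ p, 0 ≤ p → p < n → c (p + 1) = c p ∨ c (p + 1) = c p + 1) :
    ∃ D, IsW n a D ∧ ∀ p, 0 ≤ p → p ≤ n → D p = c p := by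
  refine ⟨fun p => a * (p / n) + c (p % n), ⟨by simp [h0], fun p => ?_, fun p => ?_⟩, ?_⟩
  · have h1 := Int.emod_nonneg p (show n ≠ 0 by omega)
    have h2 := Int.emod_lt_of_pos p (show 0 < n by omega)
    have h3 := Int.emod_add_mul_ediv p n
    have h4 := hs _ h1 h2
    by_cases hc : p % n + 1 = n
    · have e : p + 1 = 0 + n * (p / n + 1) := by linarith
      have e1 : (p + 1) / n = p / n + 1 := by
        rw [e, Int.add_mul_ediv_left _ _ (by omega)]; simp
      have e2 : (p + 1) % n = 0 := by rw [e]; simp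
      simp only [e1, e2]
      rw [hc, hcn] at h4
      rw [h0, mul_add, mul_one]; omega
    · have e : p + 1 = (p % n + 1) + n * (p / n) := by linarith
      have e1 : (p + 1) / n = p / n := by
        rw [e, Int.add_mul_ediv_left _ _ (by omega),
          Int.ediv_eq_zero_of_lt (by omega) (by omega)]; simp
      have e2 : (p + 1) % n = p % n + 1 := by
        rw [e, Int.add_mul_emod_self_left, Int.emod_eq_of_lt (by omega) (by omega)]
      simp only [e1, e2]
      omega
  · have e1 : (p + n) / n = p / n + 1 := by
      rw [Int.add_ediv_of_dvd_right (dvd_refl n), Int.ediv_self (by omega)]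
    have e2 : (p + n) % n = p % n := by simp
    simp only [e1, e2]; ring
  · intro p h1 h2
    rcases eq_or_lt_of_le h2 with rfl | h2
    · simp [h0, hcn, Int.ediv_self (show p ≠ 0 by omega)]
    · simp [Int.ediv_eq_zero_of_lt h1 h2, Int.emod_eq_of_lt h1 h2]

lemma exists_cut (Q : ℤ → Prop) (lo hi : ℤ) (h : lo ≤ hi)
    (hQ : ∀ i, lo < i → i + 1 ≤ hi → Q (i + 1) → Q i) :
    ∃ c, lo ≤ c ∧ c ≤ hi ∧ ∀ i, lo < i → i ≤ hi → (Q i ↔ i ≤ c) := by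
  induction hi, h using Int.leInduction with
  | base => exact ⟨lo, le_rfl, le_rfl, fun i h1 h2 => by omega⟩
  | succ hi hle ih =>
    obtain ⟨c, h1, h2, h3⟩ := ih (fun i hi1 hi2 => hQ i hi1 (by omega))
    by_cases hq : Q (hi + 1)
    · have hc : c = hi := by
        by_contra hne
        have h4 : Q hi := hQ hi (by omega) (by omega) hq
        have := (h3 hi (by omega) le_rfl).1 h4
        omega
      refine ⟨hi + 1, by omega, le_rfl, fun i hi1 hi2 => ?_⟩
      rcases eq_or_lt_of_le hi2 with rfl | hlt
      · simp [hq]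
      · have := h3 i hi1 (by omega)
        rw [this]; omega
    · refine ⟨c, h1, by omega, fun i hi1 hi2 => ?_⟩
      rcases eq_or_lt_of_le hi2 with rfl | hlt
      · simp only [hq, false_iff]; omega
      · exact h3 i hi1 (by omega)

/-! ### Running minima -/

def mn (S : ℤ → ℤ) (t : ℤ) : ℕ → ℤ
  | 0 => S t
  | k + 1 => min (mn S t k) (S (t + k + 1))

def MM (S : ℤ → ℤ) (t s : ℤ) : ℤ := mn S t (s - t).toNat

lemma MM_self (S : ℤ → ℤ) (t : ℤ) : MM S t t = S t := by simp [MM, mn]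

lemma MM_succ (S : ℤ → ℤ) {t s : ℤ} (h : t ≤ s) : MM S t (s + 1) = min (MM S t s) (S (s + 1)) := by
  have e : (s + 1 - t).toNat = (s - t).toNat + 1 := by omega
  have e2 : t + ((s - t).toNat : ℤ) + 1 = s + 1 := by omega
  simp only [MM, e, mn, e2]

lemma MM_left (S : ℤ → ℤ) {t s : ℤ} (h : t + 1 ≤ s) : MM S t s = min (S t) (MM S (t + 1) s) := by
  induction s, h using Int.leInduction with
  | base => rw [MM_succ S le_rfl, MM_self, MM_self]
  | succ s hs ih => rw [MM_succ S (by omega), MM_succ S hs, ih, min_assoc]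

lemma MM_le_right (S : ℤ → ℤ) {t s : ℤ} (h : t ≤ s) : MM S t s ≤ S s := by
  rcases eq_or_lt_of_le h with rfl | h
  · rw [MM_self]
  · have e : s = s - 1 + 1 := by ring
    rw [e, MM_succ S (by omega)]
    exact min_le_right _ _

lemma MM_le_left (S : ℤ → ℤ) {t s : ℤ} (h : t ≤ s) : MM S t s ≤ S t := by
  rcases eq_or_lt_of_le h with rfl | h
  · rw [MM_self]
  · rw [MM_left S (by omega)]
    exact min_le_left _ _

lemma le_MM (S : ℤ → ℤ) {t s m : ℤ} (h : t ≤ s) (hm : ∀ q, t ≤ q → q ≤ s → m ≤ S q) :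
    m ≤ MM S t s := by
  induction s, h using Int.leInduction with
  | base => rw [MM_self]; exact hm _ le_rfl le_rfl
  | succ s hs ih =>
    rw [MM_succ S hs]
    exact le_min (ih fun q h1 h2 => hm q h1 (by omega)) (hm _ (by omega) le_rfl)

lemma MM_shift (S S' : ℤ → ℤ) (d : ℤ) (hS : ∀ q, S' q = S (q + 1) + d) {t s : ℤ} (h : t ≤ s) :
    MM S' t s = MM S (t + 1) (s + 1) + d := by
  induction s, h using Int.leInduction with
  | base => rw [MM_self, MM_self, hS]
  | succ s hs ih => rw [MM_succ S' hs, MM_succ S (by omega), ih, hS]; omega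

def SD (D : ℤ → ℤ) : ℤ → ℤ := fun q => q - 2 * D q

def EE (D : ℤ → ℤ) (t s : ℤ) : ℤ := D t + D s + MM (SD D) t s

lemma EE_rot (D : ℤ → ℤ) {t s : ℤ} (h : t ≤ s) :
    EE (rotF D) t s = EE D (t + 1) (s + 1) - 1 := by
  have := MM_shift (SD D) (SD (rotF D)) (2 * D 1 - 1) (fun q => by simp only [SD, rotF]; ring) h
  simp only [EE, this, rotF]; ring

lemma IsW.EE_right {n a : ℤ} {D : ℤ → ℤ} (h : IsW n a D) {t s : ℤ} (hts : t ≤ s) :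
    EE D t s ≤ EE D t (s + 1) := by
  have h1 := MM_succ (SD D) hts
  have h2 := MM_le_right (SD D) hts
  have h3 := h.2.1 s
  simp only [EE, h1]
  simp only [SD] at *
  omega

lemma IsW.EE_left {n a : ℤ} {D : ℤ → ℤ} (h : IsW n a D) {t s : ℤ} (hts : t + 1 ≤ s) :
    EE D t s ≤ EE D (t + 1) s := by
  have h1 := MM_left (SD D) hts
  have h3 := h.2.1 t
  simp only [EE, h1]
  omega

lemma IsW.EE_mono_right {n a : ℤ} {D : ℤ → ℤ} (h : IsW n a D) {t s s' : ℤ} (hts : t ≤ s)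
    (hs : s ≤ s') : EE D t s ≤ EE D t s' := by
  induction s', hs using Int.leInduction with
  | base => exact le_rfl
  | succ s' hs ih => exact ih.trans (h.EE_right (by omega))

lemma IsW.EE_mono_left {n a : ℤ} {D : ℤ → ℤ} (h : IsW n a D) {t t' s : ℤ} (htt : t ≤ t')
    (hs : t' ≤ s) : EE D t s ≤ EE D t' s := by
  induction t', htt using Int.leInduction with
  | base => exact le_rfl
  | succ t' ht ih => exact (ih (by omega)).trans (h.EE_left (by omega))

lemma IsW.le_EE {n a : ℤ} {D : ℤ → ℤ} (h : IsW n a D) {t s : ℤ} (hts : t ≤ s) :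
    t ≤ EE D t s := by
  have := h.EE_mono_right le_rfl hts
  simp only [EE, MM_self, SD] at *
  omega

lemma EE_ballot (D : ℤ → ℤ) {t s : ℤ} (hts : t ≤ s) : 2 * EE D t s ≤ t + s := by
  have h1 := MM_le_left (SD D) hts
  have h2 := MM_le_right (SD D) hts
  simp only [EE, SD] at *
  omega

lemma IsW.EE_le {n a : ℤ} {D : ℤ → ℤ} (h : IsW n a D) {t s : ℤ} (hts : t ≤ s) (hs : s ≤ t + n) :
    EE D t s ≤ t + a := by
  have h1 := MM_le_left (SD D) hts
  have h2 := h.2.2 t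
  have h3 := h.mono hs
  simp only [EE, SD] at *
  omega

/-! ### The two equivariant encodings -/

def fR (a b : ℤ) (D : ℤ → ℤ) : Finset (ℤ × ℤ) :=
  (rect a b).filter (fun x => x.1 ≤ D (b - x.2) - D (-x.1))

def fT (a b : ℤ) (D : ℤ → ℤ) : Finset (ℤ × ℤ) :=
  (trap a b).filter (fun x => 0 ≤ EE D (-x.1) (a + b - x.2))

lemma mem_rect (a b i j : ℤ) : (i, j) ∈ rect a b ↔ 1 ≤ i ∧ i ≤ a ∧ 1 ≤ j ∧ j ≤ b := by
  simp only [rect, Finset.mem_Icc, Prod.mk_le_mk]; tauto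

lemma mem_trap (a b i j : ℤ) :
    (i, j) ∈ trap a b ↔ 1 ≤ i ∧ i ≤ a ∧ i ≤ j ∧ j ≤ a + b - i := by
  simp only [trap, Finset.mem_filter, Finset.mem_Icc, Prod.mk_le_mk]; omega

lemma mem_fR (a b : ℤ) (D : ℤ → ℤ) (i j : ℤ) :
    (i, j) ∈ fR a b D ↔ (i, j) ∈ rect a b ∧ i ≤ D (b - j) - D (-i) := by
  simp only [fR, Finset.mem_filter]

lemma mem_fT (a b : ℤ) (D : ℤ → ℤ) (i j : ℤ) :
    (i, j) ∈ fT a b D ↔ (i, j) ∈ trap a b ∧ 0 ≤ EE D (-i) (a + b - j) := by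
  simp only [fT, Finset.mem_filter]

lemma fR_ideal (a b : ℤ) {D : ℤ → ℤ} (h : IsW (a + b) a D) : IsIdeal (rect a b) (fR a b D) := by
  refine ⟨Finset.filter_subset _ _, ?_⟩
  rintro ⟨i, j⟩ hx ⟨i', j'⟩ hy hle
  rw [mem_fR] at *
  refine ⟨hy, ?_⟩
  simp only [Prod.mk_le_mk] at hle
  have h1 := h.mono (show b - j ≤ b - j' by omega)
  have h2 := h.mono (show -i ≤ -i' by omega)
  omega

lemma fT_ideal (a b : ℤ) {D : ℤ → ℤ} (h : IsW (a + b) a D) : IsIdeal (trap a b) (fT a b D) := by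
  refine ⟨Finset.filter_subset _ _, ?_⟩
  rintro ⟨i, j⟩ hx ⟨i', j'⟩ hy hle
  rw [mem_fT, mem_trap] at *
  refine ⟨hy, ?_⟩
  simp only [Prod.mk_le_mk] at hle
  have h1 := h.EE_mono_right (show -i ≤ a + b - j by omega) (show a + b - j ≤ a + b - j' by omega)
  have h2 := h.EE_mono_left (show -i ≤ -i' by omega) (show -i' ≤ a + b - j' by omega)
  omega

lemma fR_row (a b : ℤ) {D : ℤ → ℤ} (h : IsW (a + b) a D) :
    row (rect a b) (fR a b D) = fR a b (rotF D) := by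
  refine row_eq_of_local _ _ _ (a + b) ?_ ?_ ?_ (fR_ideal a b h) (Finset.filter_subset _ _) ?_
  · rintro ⟨i, j⟩ hx ⟨i', j'⟩ hy hle hne
    rw [mem_rect] at hx hy
    simp only [Prod.mk_le_mk, ne_eq, Prod.mk.injEq] at hle hne
    by_cases hi : i < i'
    · refine ⟨(i + 1, j), (mem_rect _ _ _ _).2 (by omega), ?_, Or.inl rfl⟩
      simp only [Prod.mk_le_mk]; omega
    · refine ⟨(i, j + 1), (mem_rect _ _ _ _).2 (by omega), ?_, Or.inr rfl⟩
      simp only [Prod.mk_le_mk]; omega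
  · rintro ⟨i, j⟩ hx ⟨i', j'⟩ hy hle hne
    rw [mem_rect] at hx hy
    simp only [Prod.mk_le_mk, ne_eq, Prod.mk.injEq] at hle hne
    by_cases hi : i < i'
    · refine ⟨(i' - 1, j'), (mem_rect _ _ _ _).2 (by omega), ?_, Or.inl rfl⟩
      simp only [Prod.mk_le_mk]; omega
    · refine ⟨(i', j' - 1), (mem_rect _ _ _ _).2 (by omega), ?_, Or.inr rfl⟩
      simp only [Prod.mk_le_mk]; omega
  · rintro ⟨i, j⟩ hx
    rw [mem_rect] at hx
    simp only; omega
  · intro i j hp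
    simp only [mem_fR, mem_rect, rotF] at *
    have e1 : -(i - 1) = -i + 1 := by ring
    have e2 : b - (j - 1) = b - j + 1 := by ring
    have e3 : -(i + 1) + 1 = -i := by ring
    have e4 : b - (j + 1) + 1 = b - j := by ring
    rw [e1, e2, e3, e4]
    have s1 := h.2.1 (-i)
    have s2 := h.2.1 (b - j)
    have p0 := h.2.2 (-a)
    have e5 : -a + (a + b) = b := by ring
    rw [e5] at p0
    have h0 := h.1
    have m1 := h.mono (show -a ≤ -i by omega)
    have m2 := h.mono (show b - j + 1 ≤ b by omega)
    have m3 := h.mono (show 0 ≤ b - j by omega)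
    have m4 := h.mono (show -i + 1 ≤ 0 by omega)
    have c1 : i = 1 → D (-i + 1) = 0 := by rintro rfl; simpa using h0
    have c2 : j = 1 → D (b - j + 1) = D b := by rintro rfl; simp
    have c3 : i = a → D (-i) = D (-a) := by rintro rfl; rfl
    have c4 : j = b → D (b - j) = 0 := by rintro rfl; simpa using h0
    generalize D (-i) = x0 at *
    generalize D (-i + 1) = x1 at *
    generalize D (b - j) = y0 at *
    generalize D (b - j + 1) = y1 at *
    generalize D (-a) = z0 at *
    generalize D b = z1 at *
    generalize D 1 = w at *
    omega

set_option maxHeartbeats 4000000 in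
lemma fT_row (a b : ℤ) (ha : 1 ≤ a) (hab : a ≤ b) {D : ℤ → ℤ} (h : IsW (a + b) a D) :
    row (trap a b) (fT a b D) = fT a b (rotF D) := by
  refine row_eq_of_local _ _ _ (a + b) ?_ ?_ ?_ (fT_ideal a b h) (Finset.filter_subset _ _) ?_
  · rintro ⟨i, j⟩ hx ⟨i', j'⟩ hy hle hne
    rw [mem_trap] at hx hy
    simp only [Prod.mk_le_mk, ne_eq, Prod.mk.injEq] at hle hne
    by_cases hi : i < i' ∧ i < j
    · refine ⟨(i + 1, j), (mem_trap _ _ _ _).2 (by omega), ?_, Or.inl rfl⟩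
      simp only [Prod.mk_le_mk]; omega
    · refine ⟨(i, j + 1), (mem_trap _ _ _ _).2 (by omega), ?_, Or.inr rfl⟩
      simp only [Prod.mk_le_mk]; omega
  · rintro ⟨i, j⟩ hx ⟨i', j'⟩ hy hle hne
    rw [mem_trap] at hx hy
    simp only [Prod.mk_le_mk, ne_eq, Prod.mk.injEq] at hle hne
    by_cases hi : i < i'
    · refine ⟨(i' - 1, j'), (mem_trap _ _ _ _).2 (by omega), ?_, Or.inl rfl⟩
      simp only [Prod.mk_le_mk]; omega
    · refine ⟨(i', j' - 1), (mem_trap _ _ _ _).2 (by omega), ?_, Or.inr rfl⟩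
      simp only [Prod.mk_le_mk]; omega
  · rintro ⟨i, j⟩ hx
    rw [mem_trap] at hx
    simp only; omega
  · intro i j hp
    rw [mem_trap] at hp
    have e1 : -(i - 1) = -i + 1 := by ring
    have e2 : a + b - (j - 1) = a + b - j + 1 := by ring
    have e3 : -(i + 1) + 1 = -i := by ring
    have e4 : a + b - (j + 1) + 1 = a + b - j := by ring
    simp only [mem_fT, mem_trap]
    rw [EE_rot D (show -i ≤ a + b - j by omega)]
    have r1 : 1 ≤ i + 1 ∧ i + 1 ≤ a ∧ i + 1 ≤ j ∧ j ≤ a + b - (i + 1) →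
        EE (rotF D) (-(i + 1)) (a + b - j) = EE D (-i) (a + b - j + 1) - 1 := by
      intro _; rw [EE_rot D (by omega), e3]
    have r2 : 1 ≤ i ∧ i ≤ a ∧ i ≤ j + 1 ∧ j + 1 ≤ a + b - i →
        EE (rotF D) (-i) (a + b - (j + 1)) = EE D (-i + 1) (a + b - j) - 1 := by
      intro _; rw [EE_rot D (by omega), e4]
    rw [e1, e2]
    obtain ⟨t, ht⟩ : ∃ t, t = -i := ⟨_, rfl⟩
    obtain ⟨s, hs⟩ : ∃ s, s = a + b - j := ⟨_, rfl⟩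
    rw [← ht, ← hs] at r1 r2 ⊢
    have b1 := h.le_EE (show t + 1 ≤ s by omega)
    have b2 := EE_ballot D (show t + 1 ≤ s by omega)
    have b3 : s + 1 ≤ t + (a + b) → EE D t (s + 1) ≤ t + a := h.EE_le (by omega)
    have q1 : i ≠ j → ((1 ≤ i + 1 ∧ i + 1 ≤ a ∧ i + 1 ≤ j ∧ j ≤ a + b - (i + 1)) ∧
        0 ≤ EE (rotF D) (-(i + 1)) s ↔ 1 ≤ EE D t (s + 1)) := by
      intro hij
      have bb := EE_ballot D (show t ≤ s + 1 by omega)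
      constructor
      · rintro ⟨k1, k2⟩
        have := r1 k1
        omega
      · intro k
        have k1 : 1 ≤ i + 1 ∧ i + 1 ≤ a ∧ i + 1 ≤ j ∧ j ≤ a + b - (i + 1) := by omega
        have := r1 k1
        exact ⟨k1, by omega⟩
    have q2 : (1 ≤ i ∧ i ≤ a ∧ i ≤ j + 1 ∧ j + 1 ≤ a + b - i) ∧
        0 ≤ EE (rotF D) t (a + b - (j + 1)) ↔ 1 ≤ EE D (t + 1) s := by
      constructor
      · rintro ⟨k1, k2⟩
        have := r2 k1
        omega
      · intro k
        have k1 : 1 ≤ i ∧ i ≤ a ∧ i ≤ j + 1 ∧ j + 1 ≤ a + b - i := by omega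
        have := r2 k1
        exact ⟨k1, by omega⟩
    have M1 := MM_left (SD D) (show t + 1 ≤ s by omega)
    have M2 := MM_succ (SD D) (show t ≤ s by omega)
    have M3 := MM_succ (SD D) (show t + 1 ≤ s by omega)
    have L1 := MM_le_left (SD D) (show t + 1 ≤ s by omega)
    have L2 := MM_le_right (SD D) (show t + 1 ≤ s by omega)
    have s1 := h.2.1 t
    have s2 := h.2.1 s
    have c1 : i = j → D s = D t + a := by
      intro hij
      rw [← h.2.2 t]; congr 1; omega
    have c2 : i = j → D (s + 1) = D (t + 1) + a := by
      intro hij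
      rw [← h.2.2 (t + 1)]; congr 1; omega
    simp only [SD] at L1 L2
    have x1 : SD D t = t - 2 * D t := rfl
    have x2 : SD D (s + 1) = s + 1 - 2 * D (s + 1) := rfl
    have E00 : EE D t s = D t + D s + MM (SD D) t s := rfl
    have E01 : EE D t (s + 1) = D t + D (s + 1) + MM (SD D) t (s + 1) := rfl
    have E10 : EE D (t + 1) s = D (t + 1) + D s + MM (SD D) (t + 1) s := rfl
    have E11 : EE D (t + 1) (s + 1) = D (t + 1) + D (s + 1) + MM (SD D) (t + 1) (s + 1) := rfl
    change MM (SD D) (t + 1) s ≤ _ at L1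
    change MM (SD D) (t + 1) s ≤ _ at L2
    by_cases hij : i = j
    · have c1' := c1 hij
      have c2' := c2 hij
      have q3 : ¬ ((1 ≤ i + 1 ∧ i + 1 ≤ a ∧ i + 1 ≤ j ∧ j ≤ a + b - (i + 1)) ∧
          0 ≤ EE (rotF D) (-(i + 1)) s) := by rintro ⟨k, -⟩; clear * - hij k; omega
      rw [q2]
      simp only [q3, false_or]
      clear c1 c2 r1 r2 q1 q2 q3
      omega
    · clear c1 c2
      rw [q1 hij, q2]
      clear q1 q2 r1 r2
      omega

lemma iter_eq {n a : ℤ} (P : Finset (ℤ × ℤ)) (f : (ℤ → ℤ) → Finset (ℤ × ℤ))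
    (hrow : ∀ D, IsW n a D → row P (f D) = f (rotF D)) {D D' : ℤ → ℤ} (h : IsW n a D)
    (h' : IsW n a D') (he : f D = f D') (k : ℕ) : f (rotF^[k] D) = f (rotF^[k] D') := by
  have hw : ∀ {D}, IsW n a D → ∀ k : ℕ, IsW n a (rotF^[k] D) := by
    intro D h k
    induction k with
    | zero => exact h
    | succ k ih => rw [Function.iterate_succ_apply']; exact ih.rot
  induction k with
  | zero => exact he
  | succ k ih =>
    rw [Function.iterate_succ_apply', Function.iterate_succ_apply', ← hrow _ (hw h k),
      ← hrow _ (hw h' k), ih]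

lemma fR_inj (a b : ℤ) (ha : 1 ≤ a) (hab : a ≤ b) {D D' : ℤ → ℤ} (h : IsW (a + b) a D)
    (h' : IsW (a + b) a D') (he : fR a b D = fR a b D') : D = D' := by
  refine h.ext_of_pos (by omega) h' 0 ?_
  intro p hp
  have h1 := iter_eq (rect a b) (fR a b) (fun D hD => fR_row a b hD) h h' he (p + 1).toNat
  have h2 := mem_fR a b (rotF^[(p + 1).toNat] D) 1 b
  rw [h1, mem_fR] at h2
  have h3 : (1, b) ∈ rect a b := (mem_rect _ _ _ _).2 (by omega)
  simp only [h3, true_and, rotF_iter D h.1, rotF_iter D' h'.1] at h2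
  have e : ((p + 1).toNat : ℤ) = p + 1 := by omega
  rw [e] at h2
  have e1 : b - b + (p + 1) = p + 1 := by ring
  have e2 : -1 + (p + 1) = p := by ring
  rw [e1, e2] at h2
  have s1 := h.2.1 p
  have s2 := h'.2.1 p
  omega

lemma EE_iter (D : ℤ → ℤ) (k : ℕ) {t s : ℤ} (hts : t ≤ s) :
    EE (rotF^[k] D) t s = EE D (t + k) (s + k) - k := by
  induction k generalizing t s with
  | zero => simp
  | succ k ih =>
    rw [Function.iterate_succ_apply', EE_rot _ hts, ih (by omega)]
    push_cast
    have e1 : t + 1 + (k : ℤ) = t + (k + 1) := by ring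
    have e2 : s + 1 + (k : ℤ) = s + (k + 1) := by ring
    rw [e1, e2]; ring

lemma fT_inj (a b : ℤ) (ha : 1 ≤ a) (hab : a ≤ b) {D D' : ℤ → ℤ} (h : IsW (a + b) a D)
    (h' : IsW (a + b) a D') (he : fT a b D = fT a b D') : D = D' := by
  have key : ∀ u p i : ℤ, 0 ≤ u → p ≤ a + b → 1 ≤ i → i ≤ a → 2 * i ≤ p →
      (u + i ≤ EE D u (u + p) ↔ u + i ≤ EE D' u (u + p)) := by
    intro u p i hu hp hi hia hip
    have h1 := iter_eq (trap a b) (fT a b) (fun D hD => fT_row a b ha hab hD) h h' he (u + i).toNat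
    have h2 := mem_fT a b (rotF^[(u + i).toNat] D) i (i + a + b - p)
    rw [h1, mem_fT] at h2
    have h3 : (i, i + a + b - p) ∈ trap a b := (mem_trap _ _ _ _).2 (by omega)
    simp only [h3, true_and] at h2
    rw [EE_iter _ _ (by omega), EE_iter _ _ (by omega)] at h2
    have e : ((u + i).toNat : ℤ) = u + i := by omega
    rw [e] at h2
    have e1 : -i + (u + i) = u := by ring
    have e2 : a + b - (i + a + b - p) + (u + i) = u + p := by ring
    rw [e1, e2] at h2
    omega
  have key2 : ∀ u p : ℤ, 0 ≤ u → 0 ≤ p → p ≤ a + b → EE D u (u + p) = EE D' u (u + p) := by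
    intro u p hu hp hpn
    have a1 := h.le_EE (show u ≤ u + p by omega)
    have a2 := h'.le_EE (show u ≤ u + p by omega)
    have b1 := h.EE_le (show u ≤ u + p by omega) (by omega)
    have b2 := h'.EE_le (show u ≤ u + p by omega) (by omega)
    have c1 := EE_ballot D (show u ≤ u + p by omega)
    have c2 := EE_ballot D' (show u ≤ u + p by omega)
    have k1 := key u p (EE D u (u + p) - u) hu hpn
    have k2 := key u p (EE D' u (u + p) - u) hu hpn
    generalize EE D u (u + p) = x at *
    generalize EE D' u (u + p) = y at *
    by_contra hne
    rcases lt_or_gt_of_ne hne with hl | hl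
    · have := k2 (by omega) (by omega) (by omega)
      omega
    · have := k1 (by omega) (by omega) (by omega)
      omega
  have last : ∀ {D : ℤ → ℤ}, IsW (a + b) a D → ∀ u : ℤ,
      EE D u (u + (a + b - 1) + 1) - EE D u (u + (a + b - 1)) =
        D (u + (a + b - 1) + 1) - D (u + (a + b - 1)) := by
    intro D h u
    have h1 := MM_succ (SD D) (show u ≤ u + (a + b - 1) by omega)
    have h2 := MM_le_left (SD D) (show u ≤ u + (a + b - 1) by omega)
    have h3 := h.2.2 u
    have e : u + (a + b - 1) + 1 = u + (a + b) := by ring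
    have h4 : SD D u ≤ SD D (u + (a + b - 1) + 1) := by
      rw [e]; simp only [SD, h3]; omega
    simp only [EE]
    omega
  refine h.ext_of_pos (by omega) h' (a + b - 1) ?_
  intro p hp
  obtain ⟨u, rfl⟩ : ∃ u, p = u + (a + b - 1) := ⟨p - (a + b - 1), by ring⟩
  have l1 := last h u
  have l2 := last h' u
  have k1 := key2 u (a + b - 1) (by omega) (by omega) (by omega)
  have k2 := key2 u (a + b) (by omega) (by omega) (by omega)
  have e : u + (a + b - 1) + 1 = u + (a + b) := by ring
  rw [e] at l1 l2 ⊢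
  omega

/-! ### Every ideal has a code -/

lemma codeR (a b : ℤ) (ha : 1 ≤ a) (hab : a ≤ b) (I : Finset (ℤ × ℤ)) (hI : IsIdeal (rect a b) I) :
    ∃ D, IsW (a + b) a D ∧ ∀ i j, (i, j) ∈ rect a b → ((i, j) ∈ I ↔ i ≤ D (b - j + i)) := by
  have down : ∀ i j i' j' : ℤ, (i, j) ∈ I → 1 ≤ i' → 1 ≤ j' → i' ≤ i → j' ≤ j → (i', j') ∈ I := by
    intro i j i' j' h h1 h2 h3 h4
    have := (mem_rect _ _ _ _).1 (hI.1 h)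
    exact hI.2 _ h _ ((mem_rect _ _ _ _).2 (by omega)) (by simp only [Prod.mk_le_mk]; omega)
  have hc : ∀ p : ℤ, ∃ c, 0 ≤ p → p ≤ a + b → (max 0 (p - b) ≤ c ∧ c ≤ min a p ∧
      ∀ i, max 0 (p - b) < i → i ≤ min a p → ((i, i + b - p) ∈ I ↔ i ≤ c)) := by
    intro p
    by_cases hp : 0 ≤ p ∧ p ≤ a + b
    · obtain ⟨c, hc⟩ := exists_cut (fun i => (i, i + b - p) ∈ I) (max 0 (p - b)) (min a p)
        (by omega) (fun i h1 h2 h3 => down _ _ _ _ h3 (by omega) (by omega) (by omega) (by omega))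
      exact ⟨c, fun _ _ => hc⟩
    · exact ⟨0, fun h1 h2 => absurd ⟨h1, h2⟩ hp⟩
  choose c hc using hc
  obtain ⟨D, hD, hDc⟩ := exists_ext (a + b) a (by omega) c
    (by have := hc 0 (by omega) (by omega); omega)
    (by have := hc (a + b) (by omega) (by omega); omega)
    (by
      intro p h0 h1
      obtain ⟨x1, x2, x3⟩ := hc p (by omega) (by omega)
      obtain ⟨y1, y2, y3⟩ := hc (p + 1) (by omega) (by omega)
      have g1 : c p ≤ c (p + 1) := by
        by_contra hlt
        have z := (x3 (c p) (by omega) (by omega)).2 le_rfl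
        have z2 := down _ _ (c p) (c p + b - (p + 1)) z (by omega) (by omega) (by omega) (by omega)
        have := (y3 (c p) (by omega) (by omega)).1 z2
        omega
      have g2 : c (p + 1) ≤ c p + 1 := by
        by_contra hlt
        have z := (y3 (c (p + 1)) (by omega) (by omega)).2 le_rfl
        have z2 := down _ _ (c (p + 1) - 1) (c (p + 1) - 1 + b - p) z
          (by omega) (by omega) (by omega) (by omega)
        have := (x3 (c (p + 1) - 1) (by omega) (by omega)).1 z2
        omega
      omega)
  refine ⟨D, hD, ?_⟩
  intro i j hij
  rw [mem_rect] at hij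
  rw [hDc _ (by omega) (by omega), ← (hc (b - j + i) (by omega) (by omega)).2.2 i
    (by omega) (by omega)]
  have e : i + b - (b - j + i) = j := by ring
  rw [e]

lemma codeT (a b : ℤ) (ha : 1 ≤ a) (hab : a ≤ b) (I : Finset (ℤ × ℤ)) (hI : IsIdeal (trap a b) I) :
    ∃ D, IsW (a + b) a D ∧
      ∀ i j, (i, j) ∈ trap a b → ((i, j) ∈ I ↔ i ≤ EE D 0 (a + b - j + i)) := by
  have down : ∀ i j i' j' : ℤ, (i, j) ∈ I → 1 ≤ i' → i' ≤ j' → i' ≤ i → j' ≤ j →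
      (i', j') ∈ I := by
    intro i j i' j' h h1 h2 h3 h4
    have := (mem_trap _ _ _ _).1 (hI.1 h)
    exact hI.2 _ h _ ((mem_trap _ _ _ _).2 (by omega)) (by simp only [Prod.mk_le_mk]; omega)
  have hc : ∀ p : ℤ, ∃ c, 0 ≤ p → p ≤ a + b → (0 ≤ c ∧ c ≤ min a (p / 2) ∧
      ∀ i, 0 < i → i ≤ min a (p / 2) → ((i, i + (a + b) - p) ∈ I ↔ i ≤ c)) := by
    intro p
    by_cases hp : 0 ≤ p ∧ p ≤ a + b
    · obtain ⟨c, hc⟩ := exists_cut (fun i => (i, i + (a + b) - p) ∈ I) 0 (min a (p / 2))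
        (by omega) (fun i h1 h2 h3 => down _ _ _ _ h3 (by omega) (by omega) (by omega) (by omega))
      exact ⟨c, fun _ _ => hc⟩
    · exact ⟨0, fun h1 h2 => absurd ⟨h1, h2⟩ hp⟩
  choose c hc using hc
  have hstep : ∀ p, 0 ≤ p → p < a + b → c (p + 1) = c p ∨ c (p + 1) = c p + 1 := by
    intro p h0 h1
    obtain ⟨x1, x2, x3⟩ := hc p (by omega) (by omega)
    obtain ⟨y1, y2, y3⟩ := hc (p + 1) (by omega) (by omega)
    have g1 : c p ≤ c (p + 1) := by
      by_contra hlt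
      have z := (x3 (c p) (by omega) (by omega)).2 le_rfl
      have z2 := down _ _ (c p) (c p + (a + b) - (p + 1)) z
        (by omega) (by omega) (by omega) (by omega)
      have := (y3 (c p) (by omega) (by omega)).1 z2
      omega
    have g2 : c (p + 1) ≤ c p + 1 := by
      by_contra hlt
      have z := (y3 (c (p + 1)) (by omega) (by omega)).2 le_rfl
      have z2 := down _ _ (c (p + 1) - 1) (c (p + 1) - 1 + (a + b) - p) z
        (by omega) (by omega) (by omega) (by omega)
      have := (x3 (c (p + 1) - 1) (by omega) (by omega)).1 z2
      omega
    omega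
  obtain ⟨u, hu⟩ : ∃ u : ℤ → ℤ, u = fun p => MM (SD c) p (a + b) := ⟨_, rfl⟩
  obtain ⟨v, hv⟩ : ∃ v : ℤ → ℤ, v = fun p => min (u p) (a - c (a + b)) := ⟨_, rfl⟩
  have hv' : ∀ p, v p = min (u p) (a - c (a + b)) := fun p => by rw [hv]
  have c0 := hc 0 (by omega) (by omega)
  have cn := hc (a + b) (by omega) (by omega)
  have un : u (a + b) = a + b - 2 * c (a + b) := by rw [hu]; simp only [MM_self, SD]
  have u0 : u 0 = 0 := by
    have h1 : u 0 ≤ SD c 0 := by rw [hu]; exact MM_le_left _ (by omega)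
    have h2 : 0 ≤ u 0 := by
      rw [hu]
      refine le_MM _ (by omega) fun q h1 h2 => ?_
      have := hc q h1 h2
      simp only [SD]; omega
    simp only [SD] at h1
    omega
  have us : ∀ p, 0 ≤ p → p < a + b → u p = min (p - 2 * c p) (u (p + 1)) := by
    intro p h0 h1
    rw [hu]
    exact MM_left _ (by omega)
  have ule : ∀ p, 0 ≤ p → p ≤ a + b → u p ≤ p - 2 * c p := by
    intro p h0 h1
    rw [hu]
    exact MM_le_left _ (by omega)
  obtain ⟨D, hD, hDc⟩ := exists_ext (a + b) a (by omega) (fun p => c p + v p)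
    (by simp only [hv', u0]; omega)
    (by simp only [hv', un]; omega)
    (by
      intro p h0 h1
      have := hstep p h0 h1
      have := us p h0 h1
      have := ule (p + 1) (by omega) (by omega)
      have := hv' p
      have := hv' (p + 1)
      omega)
  have hM : ∀ p, 0 ≤ p → p ≤ a + b → MM (SD D) 0 p = - v p := by
    intro p h0
    induction p, h0 using Int.leInduction with
    | base =>
      intro _
      have := hD.1
      have := hv' 0
      rw [MM_self]; simp only [SD]; omega
    | succ p h0 ih =>
      intro h1
      have i1 := ih (by omega)
      rw [MM_succ _ h0, i1]
      have := hDc (p + 1) (by omega) h1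
      have := hstep p h0 (by omega)
      have := us p h0 (by omega)
      have := ule (p + 1) (by omega) (by omega)
      have := hv' p
      have := hv' (p + 1)
      simp only [SD]
      omega
  refine ⟨D, hD, ?_⟩
  intro i j hij
  rw [mem_trap] at hij
  have e : i + (a + b) - (a + b - j + i) = j := by ring
  have h1 := (hc (a + b - j + i) (by omega) (by omega)).2.2 i (by omega) (by omega)
  rw [e] at h1
  rw [h1]
  simp only [EE]
  rw [hD.1, hM _ (by omega) (by omega), hDc _ (by omega) (by omega)]
  omega

/-! ### Counting and conclusion -/

lemma bij_of_code {W : Type} (P : Finset (ℤ × ℤ)) (f : W → Finset (ℤ × ℤ))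
    (hf : ∀ w, IsIdeal P (f w)) (hinj : Function.Injective f) (g : Finset (ℤ × ℤ) → W → Prop)
    (hg : ∀ I, IsIdeal P I → ∃ w, g I w)
    (hg2 : ∀ I I' w, IsIdeal P I → IsIdeal P I' → g I w → g I' w → I = I') :
    ∀ I, IsIdeal P I → ∃ w, f w = I := by
  have hfin : Finite {I // IsIdeal P I} := by
    refine Set.Finite.subset (Finset.finite_toSet P.powerset) ?_
    intro I hI
    exact Finset.mem_coe.2 (Finset.mem_powerset.2 hI.1)
  let F : W → {I // IsIdeal P I} := fun w => ⟨f w, hf w⟩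
  have hF : Function.Injective F := fun w w' h => hinj (congrArg Subtype.val h)
  choose G hG using fun I : {I // IsIdeal P I} => hg I.1 I.2
  have hGi : Function.Injective G := fun I I' h =>
    Subtype.ext (hg2 _ _ _ I.2 I'.2 (hG I) (h ▸ hG I'))
  have hW : Finite W := Finite.of_injective F hF
  have hb := hF.bijective_of_nat_card_le (Nat.card_le_card_of_injective G hGi)
  intro I hI
  obtain ⟨w, hw⟩ := hb.2 ⟨I, hI⟩
  exact ⟨w, congrArg Subtype.val hw⟩

/-- Hopkins' conjecture / main theorem: there is a bijection between
`J(𝓡(a,b))` and `J(𝓣(a,b))` that commutes with rowmotion; in particular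
rowmotion on the two posets has the same orbit structure. -/
theorem rect_trap_rowmotion_equivariant_bijection (a b : ℤ) (ha : 1 ≤ a) (hab : a ≤ b) :
    ∃ φ : Finset (ℤ × ℤ) → Finset (ℤ × ℤ),
      Set.BijOn φ {I | IsIdeal (rect a b) I} {I | IsIdeal (trap a b) I} ∧
      ∀ I : Finset (ℤ × ℤ), IsIdeal (rect a b) I →
        φ (row (rect a b) I) = row (trap a b) (φ I) := by
  have surR := bij_of_code (W := {D // IsW (a + b) a D}) (rect a b) (fun D => fR a b D.1)
    (fun D => fR_ideal a b D.2) (fun D D' h => Subtype.ext (fR_inj a b ha hab D.2 D'.2 h))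
    (fun I D => ∀ i j, (i, j) ∈ rect a b → ((i, j) ∈ I ↔ i ≤ D.1 (b - j + i)))
    (fun I hI => by
      obtain ⟨D, h1, h2⟩ := codeR a b ha hab I hI
      exact ⟨⟨D, h1⟩, h2⟩)
    (fun I I' D hI hI' h1 h2 => by
      ext ⟨i, j⟩
      by_cases hp : (i, j) ∈ rect a b
      · rw [h1 i j hp, h2 i j hp]
      · exact ⟨fun h => absurd (hI.1 h) hp, fun h => absurd (hI'.1 h) hp⟩)
  have surT := bij_of_code (W := {D // IsW (a + b) a D}) (trap a b) (fun D => fT a b D.1)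
    (fun D => fT_ideal a b D.2) (fun D D' h => Subtype.ext (fT_inj a b ha hab D.2 D'.2 h))
    (fun I D => ∀ i j, (i, j) ∈ trap a b → ((i, j) ∈ I ↔ i ≤ EE D.1 0 (a + b - j + i)))
    (fun I hI => by
      obtain ⟨D, h1, h2⟩ := codeT a b ha hab I hI
      exact ⟨⟨D, h1⟩, h2⟩)
    (fun I I' D hI hI' h1 h2 => by
      ext ⟨i, j⟩
      by_cases hp : (i, j) ∈ trap a b
      · rw [h1 i j hp, h2 i j hp]
      · exact ⟨fun h => absurd (hI.1 h) hp, fun h => absurd (hI'.1 h) hp⟩)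
  have ex : ∀ I, ∃ D, IsIdeal (rect a b) I → IsW (a + b) a D ∧ fR a b D = I := by
    intro I
    by_cases hI : IsIdeal (rect a b) I
    · obtain ⟨D, hD⟩ := surR I hI
      exact ⟨D.1, fun _ => ⟨D.2, hD⟩⟩
    · exact ⟨0, fun h => absurd h hI⟩
  choose c hc using ex
  have hcf : ∀ D, IsW (a + b) a D → c (fR a b D) = D := fun D hD =>
    fR_inj a b ha hab (hc _ (fR_ideal a b hD)).1 hD (hc _ (fR_ideal a b hD)).2
  refine ⟨fun I => fT a b (c I), ⟨fun I hI => fT_ideal a b (hc I hI).1, ?_, ?_⟩, ?_⟩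
  · intro I hI I' hI' h
    have := fT_inj a b ha hab (hc I hI).1 (hc I' hI').1 h
    rw [← (hc I hI).2, ← (hc I' hI').2, this]
  · intro I hI
    obtain ⟨D, hD⟩ := surT I hI
    refine ⟨fR a b D.1, fR_ideal a b D.2, ?_⟩
    simp only [hcf _ D.2]
    exact hD
  · intro I hI
    obtain ⟨h1, h2⟩ := hc I hI
    have h3 : row (rect a b) I = fR a b (rotF (c I)) := by
      conv_lhs => rw [← h2]
      exact fR_row a b h1
    simp only [h3, hcf _ h1.rot]
    exact (fT_row a b ha hab h1).symm

end Stmt0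
end
end

section
/- Let 1 ≤ a ≤ 3 and a ≤ b. For any toggle-on-antichains-symmetric probability distribution μ on J(𝓣(a,b)), the expected down-degree equals ab/(a+b): E[μ; ddeg] = ab/(a+b). -/
/-!
STATEMENT 10: For 1 ≤ a ≤ 3 and a ≤ b, every toggle-on-antichains-symmetric
probability distribution μ on J(𝓣(a,b)) has expected down-degree ab/(a+b).
-/

open scoped Classical

noncomputable section

namespace Stmt10

/-- The trapezoid poset `𝓣(a,b) = {(i,j) : 1 ≤ i ≤ a, i ≤ j ≤ a+b-i}`,
as a finite subset of `ℤ × ℤ` with the componentwise order. -/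
def trap (a b : ℤ) : Finset (ℤ × ℤ) :=
  (Finset.Icc (1, 1) (a, a + b - 1)).filter (fun p => p.1 ≤ p.2 ∧ p.2 ≤ a + b - p.1)

/-- `I` is an order ideal of the poset with ground set `P ⊆ ℤ × ℤ`. -/
def IsIdeal (P I : Finset (ℤ × ℤ)) : Prop :=
  I ⊆ P ∧ ∀ x ∈ I, ∀ y ∈ P, y ≤ x → y ∈ I

/-- `J(P)`: the set of order ideals of `P`. -/
def ideals (P : Finset (ℤ × ℤ)) : Finset (Finset (ℤ × ℤ)) :=
  P.powerset.filter (fun I => IsIdeal P I)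

/-- The down-degree of `I`: the number of maximal elements of `I`. -/
def ddeg (I : Finset (ℤ × ℤ)) : ℕ :=
  (I.filter (fun x => ∀ y ∈ I, x ≤ y → x = y)).card

/-- `𝒯_A⁺(I) = 1` if `A ∩ I = ∅` and `I ∪ A` is an order ideal, else `0`. -/
def togPlus (P A I : Finset (ℤ × ℤ)) : ℝ :=
  if (∀ x ∈ A, x ∉ I) ∧ IsIdeal P (I ∪ A) then 1 else 0

/-- `𝒯_A⁻(I) = 1` if `A ⊆ I` and `I \ A` is an order ideal, else `0`. -/
def togMinus (P A I : Finset (ℤ × ℤ)) : ℝ :=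
  if A ⊆ I ∧ IsIdeal P (I \ A) then 1 else 0

/-- `𝒯_A = 𝒯_A⁺ − 𝒯_A⁻`. -/
def tog (P A I : Finset (ℤ × ℤ)) : ℝ := togPlus P A I - togMinus P A I

/-- Expectation of the statistic `f` with respect to `μ` on `J(P)`. -/
def expect (P : Finset (ℤ × ℤ)) (μ : Finset (ℤ × ℤ) → ℝ) (f : Finset (ℤ × ℤ) → ℝ) : ℝ :=
  ∑ I ∈ ideals P, μ I * f I

/-- `μ` is a probability distribution on `J(P)`. -/
def IsDistribution (P : Finset (ℤ × ℤ)) (μ : Finset (ℤ × ℤ) → ℝ) : Prop :=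
  (∀ I ∈ ideals P, 0 ≤ μ I) ∧ ∑ I ∈ ideals P, μ I = 1

/-- `μ` is toggle-on-antichains-symmetric: `E[μ; 𝒯_A] = 0` for every antichain `A ⊆ P`. -/
def ToggleAntichainSymmetric (P : Finset (ℤ × ℤ)) (μ : Finset (ℤ × ℤ) → ℝ) : Prop :=
  ∀ A : Finset (ℤ × ℤ), A ⊆ P → IsAntichain (· ≤ ·) (A : Set (ℤ × ℤ)) →
    expect P μ (tog P A) = 0

/-- `μ` is toggle-symmetric: `E[μ; 𝒯_p⁺ − 𝒯_p⁻] = 0` for every `p ∈ P`. -/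
def ToggleSymmetric (P : Finset (ℤ × ℤ)) (μ : Finset (ℤ × ℤ) → ℝ) : Prop :=
  ∀ p ∈ P, expect P μ (tog P {p}) = 0


def maxs (I : Finset (ℤ × ℤ)) : Finset (ℤ × ℤ) :=
  I.filter (fun x => ∀ y ∈ I, x ≤ y → x = y)

def mins (P I : Finset (ℤ × ℤ)) : Finset (ℤ × ℤ) :=
  P.filter (fun x => x ∉ I ∧ ∀ y ∈ P, y ∉ I → y ≤ x → y = x)

def gen (P A : Finset (ℤ × ℤ)) : Finset (ℤ × ℤ) :=
  P.filter (fun p => ∃ q ∈ A, p ≤ q)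

lemma mem_ideals {P I : Finset (ℤ × ℤ)} : I ∈ ideals P ↔ IsIdeal P I := by
  simp only [ideals, Finset.mem_filter, Finset.mem_powerset]
  exact ⟨fun h => h.2, fun h => ⟨h.1, h⟩⟩

lemma minus_iff {P I A : Finset (ℤ × ℤ)} (hI : IsIdeal P I)
    (hA : IsAntichain (· ≤ ·) (A : Set (ℤ × ℤ))) :
    (A ⊆ I ∧ IsIdeal P (I \ A)) ↔ A ⊆ maxs I := by
  constructor
  · rintro ⟨h1, h2⟩ x hx
    simp only [maxs, Finset.mem_filter]
    refine ⟨h1 hx, fun y hy hxy => ?_⟩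
    by_cases hyA : y ∈ A
    · exact hA.eq hx hyA hxy
    · have := h2.2 y (Finset.mem_sdiff.2 ⟨hy, hyA⟩) x (hI.1 (h1 hx)) hxy
      exact absurd hx (Finset.mem_sdiff.1 this).2
  · intro h
    have h1 : A ⊆ I := fun x hx => (Finset.mem_filter.1 (h hx)).1
    refine ⟨h1, fun x hx => hI.1 (Finset.mem_sdiff.1 hx).1, fun x hx y hy hyx => ?_⟩
    rw [Finset.mem_sdiff] at hx ⊢
    refine ⟨hI.2 x hx.1 y hy hyx, fun hyA => hx.2 ?_⟩
    have := (Finset.mem_filter.1 (h hyA)).2 x hx.1 hyx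
    exact this ▸ hyA

lemma plus_iff {P I A : Finset (ℤ × ℤ)} (hI : IsIdeal P I) (hAP : A ⊆ P)
    (hA : IsAntichain (· ≤ ·) (A : Set (ℤ × ℤ))) :
    ((∀ x ∈ A, x ∉ I) ∧ IsIdeal P (I ∪ A)) ↔ A ⊆ mins P I := by
  constructor
  · rintro ⟨h1, h2⟩ x hx
    simp only [mins, Finset.mem_filter]
    refine ⟨hAP hx, h1 x hx, fun y hy hyI hyx => ?_⟩
    have := h2.2 x (Finset.mem_union_right _ hx) y hy hyx
    rcases Finset.mem_union.1 this with h | h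
    · exact absurd h hyI
    · exact hA.eq h hx hyx
  · intro h
    refine ⟨fun x hx => (Finset.mem_filter.1 (h hx)).2.1,
      Finset.union_subset hI.1 hAP, fun x hx y hy hyx => ?_⟩
    rcases Finset.mem_union.1 hx with hx | hx
    · exact Finset.mem_union_left _ (hI.2 x hx y hy hyx)
    · by_cases hyI : y ∈ I
      · exact Finset.mem_union_left _ hyI
      · have := (Finset.mem_filter.1 (h hx)).2.2 y hy hyI hyx
        exact Finset.mem_union_right _ (this ▸ hx)

lemma maxs_anti (I : Finset (ℤ × ℤ)) : IsAntichain (· ≤ ·) (maxs I : Set (ℤ × ℤ)) := by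
  intro x hx y hy hne hle
  simp only [maxs, Finset.coe_filter, Set.mem_ofPred_eq] at hx hy
  exact hne (hx.2 y hy.1 hle)

lemma mins_anti (P I : Finset (ℤ × ℤ)) : IsAntichain (· ≤ ·) (mins P I : Set (ℤ × ℤ)) := by
  intro x hx y hy hne hle
  simp only [mins, Finset.coe_filter, Set.mem_ofPred_eq] at hx hy
  exact hne (hy.2.2 x hx.1 hx.2.1 hle)

lemma sub_eq {P : Finset (ℤ × ℤ)} {μ : Finset (ℤ × ℤ) → ℝ}
    (hsym : ToggleAntichainSymmetric P μ) (A : Finset (ℤ × ℤ)) (hAP : A ⊆ P) :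
    ∑ I ∈ ideals P, μ I * (if A ⊆ maxs I then 1 else 0) =
    ∑ I ∈ ideals P, μ I * (if A ⊆ mins P I then 1 else 0) := by
  by_cases hA : IsAntichain (· ≤ ·) (A : Set (ℤ × ℤ))
  · have h := hsym A hAP hA
    unfold expect at h
    symm
    rw [← sub_eq_zero, ← Finset.sum_sub_distrib]
    refine Eq.trans ?_ h
    refine Finset.sum_congr rfl fun I hI => ?_
    rw [mem_ideals] at hI
    simp only [tog, togPlus, togMinus, minus_iff hI hA, plus_iff hI hAP hA]
    ring
  · refine Finset.sum_congr rfl fun I hI => ?_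
    rw [if_neg, if_neg]
    · exact fun h => hA ((mins_anti P I).subset (by exact_mod_cast h))
    · exact fun h => hA ((maxs_anti I).subset (by exact_mod_cast h))

lemma ind_expand {P X A : Finset (ℤ × ℤ)} (hX : X ⊆ P) :
    (if A ⊆ X then (1:ℝ) else 0) =
      (if X = A then 1 else 0) + ∑ B ∈ P.powerset.filter (fun B => A ⊂ B), if X = B then 1 else 0 := by
  rw [Finset.sum_ite_eq]
  simp only [Finset.mem_filter, Finset.mem_powerset, hX, true_and]
  by_cases h : X = A
  · subst h; simp
  · by_cases h2 : A ⊆ X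
    · have : A ⊂ X := h2.ssubset_of_ne (Ne.symm h)
      simp [h, h2, this]
    · have : ¬ A ⊂ X := fun h => h2 h.subset
      simp [h, h2, this]

lemma eq_eq {P : Finset (ℤ × ℤ)} {μ : Finset (ℤ × ℤ) → ℝ}
    (hsym : ToggleAntichainSymmetric P μ) : ∀ (m : ℕ) (A : Finset (ℤ × ℤ)), A ⊆ P →
    P.card - A.card = m →
    ∑ I ∈ ideals P, μ I * (if maxs I = A then 1 else 0) =
    ∑ I ∈ ideals P, μ I * (if mins P I = A then 1 else 0) := by
  intro m
  induction m using Nat.strong_induction_on with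
  | _ m ih =>
    intro A hAP hm
    have h := sub_eq hsym A hAP
    have e1 : ∑ I ∈ ideals P, μ I * (if A ⊆ maxs I then 1 else 0) =
        ∑ I ∈ ideals P, μ I * (if maxs I = A then 1 else 0) +
        ∑ B ∈ P.powerset.filter (fun B => A ⊂ B),
          ∑ I ∈ ideals P, μ I * (if maxs I = B then 1 else 0) := by
      rw [Finset.sum_comm, ← Finset.sum_add_distrib]
      refine Finset.sum_congr rfl fun I hI => ?_
      rw [ind_expand (X := maxs I) ((Finset.filter_subset _ _).trans (mem_ideals.1 hI).1), mul_add,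
        Finset.mul_sum]
    have e2 : ∑ I ∈ ideals P, μ I * (if A ⊆ mins P I then 1 else 0) =
        ∑ I ∈ ideals P, μ I * (if mins P I = A then 1 else 0) +
        ∑ B ∈ P.powerset.filter (fun B => A ⊂ B),
          ∑ I ∈ ideals P, μ I * (if mins P I = B then 1 else 0) := by
      rw [Finset.sum_comm, ← Finset.sum_add_distrib]
      refine Finset.sum_congr rfl fun I hI => ?_
      rw [ind_expand (X := mins P I) (P := P) (Finset.filter_subset _ _), mul_add, Finset.mul_sum]
    have e3 : ∑ B ∈ P.powerset.filter (fun B => A ⊂ B),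
          ∑ I ∈ ideals P, μ I * (if maxs I = B then 1 else 0) =
        ∑ B ∈ P.powerset.filter (fun B => A ⊂ B),
          ∑ I ∈ ideals P, μ I * (if mins P I = B then 1 else 0) := by
      refine Finset.sum_congr rfl fun B hB => ?_
      simp only [Finset.mem_filter, Finset.mem_powerset] at hB
      have c1 := Finset.card_lt_card hB.2
      have c2 := Finset.card_le_card hB.1
      exact ih _ (by omega) B hB.1 rfl
    rw [e1, e2, e3] at h
    linarith

lemma push {P : Finset (ℤ × ℤ)} {μ : Finset (ℤ × ℤ) → ℝ}
    (hsym : ToggleAntichainSymmetric P μ) (g : Finset (ℤ × ℤ) → ℝ) :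
    ∑ I ∈ ideals P, μ I * g (maxs I) = ∑ I ∈ ideals P, μ I * g (mins P I) := by
  have key : ∀ X : Finset (ℤ × ℤ), X ⊆ P →
      g X = ∑ A ∈ P.powerset, g A * (if X = A then 1 else 0) := by
    intro X hX
    simp [hX]
  have h1 : ∑ I ∈ ideals P, μ I * g (maxs I) = ∑ A ∈ P.powerset, g A *
      ∑ I ∈ ideals P, μ I * (if maxs I = A then 1 else 0) := by
    simp_rw [Finset.mul_sum]
    rw [Finset.sum_comm]
    refine Finset.sum_congr rfl fun I hI => ?_
    rw [key (maxs I) ((Finset.filter_subset _ _).trans (mem_ideals.1 hI).1), Finset.mul_sum]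
    exact Finset.sum_congr rfl fun A _ => by ring
  have h2 : ∑ I ∈ ideals P, μ I * g (mins P I) = ∑ A ∈ P.powerset, g A *
      ∑ I ∈ ideals P, μ I * (if mins P I = A then 1 else 0) := by
    simp_rw [Finset.mul_sum]
    rw [Finset.sum_comm]
    refine Finset.sum_congr rfl fun I hI => ?_
    rw [key (mins P I) (Finset.filter_subset _ _), Finset.mul_sum]
    exact Finset.sum_congr rfl fun A _ => by ring
  rw [h1, h2]
  refine Finset.sum_congr rfl fun A hA => ?_
  rw [eq_eq hsym _ A (Finset.mem_powerset.1 hA) rfl]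

lemma gen_maxs {P I : Finset (ℤ × ℤ)} (hI : IsIdeal P I) : gen P (maxs I) = I := by
  ext p
  simp only [gen, maxs, Finset.mem_filter]
  constructor
  · rintro ⟨hp, q, ⟨hq, -⟩, hpq⟩
    exact hI.2 q hq p hp hpq
  · intro hp
    refine ⟨hI.1 hp, ?_⟩
    obtain ⟨q, hpq, hq⟩ := I.exists_le_maximal hp
    exact ⟨q, ⟨hq.1, fun y hy hqy => le_antisymm hqy (hq.2 hy hqy)⟩, hpq⟩

lemma homomesy {P : Finset (ℤ × ℤ)} {μ : Finset (ℤ × ℤ) → ℝ} (hμ : IsDistribution P μ)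
    (hsym : ToggleAntichainSymmetric P μ) (F : Finset (ℤ × ℤ) → ℝ) (n α : ℝ)
    (h : ∀ I, IsIdeal P I → F (gen P (mins P I)) - F I = n * ((mins P I).card : ℝ) - α) :
    n * expect P μ (fun I => (ddeg I : ℝ)) = α := by
  have h1 := push hsym (fun A => F (gen P A))
  have h2 := push hsym (fun A => (A.card : ℝ))
  have h3 : ∑ I ∈ ideals P, μ I * F (gen P (maxs I)) = ∑ I ∈ ideals P, μ I * F I :=
    Finset.sum_congr rfl fun I hI => by rw [gen_maxs (mem_ideals.1 hI)]
  have h4 : ∑ I ∈ ideals P, (μ I * F (gen P (mins P I)) - μ I * F I) =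
      ∑ I ∈ ideals P, (n * (μ I * ((mins P I).card : ℝ)) - μ I * α) :=
    Finset.sum_congr rfl fun I hI => by
      rw [← mul_sub, h I (mem_ideals.1 hI)]; ring
  rw [Finset.sum_sub_distrib, Finset.sum_sub_distrib, ← Finset.mul_sum, ← Finset.sum_mul,
    hμ.2, ← h2, ← h1, h3] at h4
  have h5 : expect P μ (fun I => (ddeg I : ℝ)) = ∑ I ∈ ideals P, μ I * ((maxs I).card : ℝ) := rfl
  rw [h5]
  linarith

lemma mem_trap {a b i j : ℤ} : (i, j) ∈ trap a b ↔ 1 ≤ i ∧ i ≤ a ∧ i ≤ j ∧ j ≤ a + b - i := by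
  simp only [trap, Finset.mem_filter, Finset.mem_Icc, Prod.mk_le_mk]
  omega

def ht (i : ℤ) (I : Finset (ℤ × ℤ)) : ℤ := i - 1 + ((I.filter (fun p => p.1 = i)).card : ℤ)

lemma ht_eq {i c : ℤ} {I : Finset (ℤ × ℤ)} (hc : i - 1 ≤ c)
    (h : ∀ j, (i, j) ∈ I ↔ i ≤ j ∧ j ≤ c) : ht i I = c := by
  have : I.filter (fun p => p.1 = i) = (Finset.Icc i c).image (fun j => (i, j)) := by
    ext ⟨k, j⟩
    simp only [Finset.mem_filter, Finset.mem_image, Finset.mem_Icc, Prod.mk.injEq]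
    constructor
    · rintro ⟨h1, rfl⟩
      exact ⟨j, (h j).1 h1, rfl, rfl⟩
    · rintro ⟨j', h1, rfl, rfl⟩
      exact ⟨(h j').2 h1, rfl⟩
  rw [ht, this, Finset.card_image_of_injective _ (fun x y hxy => by simpa using hxy), Int.card_Icc]
  omega

lemma ht_spec {a b i : ℤ} (hi : 1 ≤ i) (hia : i ≤ a) (hab : a ≤ b) {I : Finset (ℤ × ℤ)}
    (hI : IsIdeal (trap a b) I) :
    ∃ c, ht i I = c ∧ i - 1 ≤ c ∧ c ≤ a + b - i ∧ ∀ j, (i, j) ∈ I ↔ i ≤ j ∧ j ≤ c := by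
  have : ∃ c, i - 1 ≤ c ∧ c ≤ a + b - i ∧ ∀ j, (i, j) ∈ I ↔ i ≤ j ∧ j ≤ c := by
    by_cases hne : ∃ j, (i, j) ∈ I
    · obtain ⟨c, hc, hmax⟩ := Int.exists_greatest_of_bdd (P := fun j => (i, j) ∈ I)
        ⟨a + b - i, fun z hz => (mem_trap.1 (hI.1 hz)).2.2.2⟩ hne
      have hc' := mem_trap.1 (hI.1 hc)
      refine ⟨c, by omega, by omega, fun j => ⟨fun hj => ?_, fun hj => ?_⟩⟩
      · exact ⟨(mem_trap.1 (hI.1 hj)).2.2.1, hmax j hj⟩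
      · exact hI.2 _ hc _ (mem_trap.2 (by omega)) (Prod.mk_le_mk.2 ⟨le_rfl, hj.2⟩)
    · push Not at hne
      refine ⟨i - 1, le_rfl, by omega, fun j => ⟨fun hj => absurd hj (hne j), fun hj => by omega⟩⟩
  obtain ⟨c, h1, h2, h3⟩ := this
  exact ⟨c, ht_eq h1 h3, h1, h2, h3⟩

lemma mem_mins {a b i j : ℤ} {I : Finset (ℤ × ℤ)} : (i, j) ∈ mins (trap a b) I ↔
    (1 ≤ i ∧ i ≤ a ∧ i ≤ j ∧ j ≤ a + b - i) ∧ (i, j) ∉ I ∧ ∀ k l, (1 ≤ k ∧ k ≤ a ∧ k ≤ l ∧ l ≤ a + b - k) →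
      (k, l) ∉ I → k ≤ i → l ≤ j → k = i ∧ l = j := by
  simp only [mins, Finset.mem_filter, mem_trap, Prod.forall, Prod.mk_le_mk, Prod.mk.injEq, and_imp]

lemma mem_gen {a b i j : ℤ} {A : Finset (ℤ × ℤ)} : (i, j) ∈ gen (trap a b) A ↔
    (1 ≤ i ∧ i ≤ a ∧ i ≤ j ∧ j ≤ a + b - i) ∧ ∃ k l, (k, l) ∈ A ∧ i ≤ k ∧ j ≤ l := by
  simp only [gen, Finset.mem_filter, mem_trap, Prod.exists, Prod.mk_le_mk]

lemma card_one {p : Prop} [Decidable p] (c : ℤ × ℤ) :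
    ((if p then {c} else ∅ : Finset (ℤ × ℤ)).card : ℤ) = if p then 1 else 0 := by
  split_ifs <;> simp

lemma case1 {b : ℤ} (hab : 1 ≤ b) {I : Finset (ℤ × ℤ)} (hI : IsIdeal (trap 1 b) I) :
    ht 1 (gen (trap 1 b) (mins (trap 1 b) I)) - ht 1 I =
      (1 + b) * ((mins (trap 1 b) I).card : ℤ) - b := by
  obtain ⟨x, hx, hx1, hx2, mx⟩ := ht_spec (i := 1) le_rfl le_rfl hab hI
  have hm : mins (trap 1 b) I = if x + 1 ≤ b then {(1, x + 1)} else ∅ := by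
    ext ⟨i, j⟩
    rw [mem_mins]
    constructor
    · rintro ⟨h1, h2, h3⟩
      obtain rfl : i = 1 := by omega
      rw [mx] at h2
      have := h3 1 (x + 1) (by omega) (by rw [mx]; omega) (by omega) (by omega)
      rw [if_pos (by omega)]
      simp; omega
    · intro h
      split_ifs at h with hc
      · simp at h
        obtain ⟨rfl, rfl⟩ := h
        refine ⟨by omega, by rw [mx]; omega, fun k l h1 h2 h3 h4 => ?_⟩
        obtain rfl : k = 1 := by omega
        rw [mx] at h2
        omega
      · simp at h
  have hg : ht 1 (gen (trap 1 b) (mins (trap 1 b) I)) = if x + 1 ≤ b then x + 1 else 0 := by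
    apply ht_eq
    · split_ifs <;> omega
    · intro j
      rw [mem_gen, hm]
      split_ifs with hc
      · simp; omega
      · simp; omega
  rw [hg, hx, hm, card_one]
  split_ifs <;> linarith

lemma card_two {p q : Prop} [Decidable p] [Decidable q] (x y : ℤ) :
    (((if p then {(1, x)} else ∅) ∪ (if q then {(2, y)} else ∅) : Finset (ℤ × ℤ)).card : ℤ) =
      (if p then 1 else 0) + (if q then 1 else 0) := by
  split_ifs <;> simp

lemma card_three {p q r : Prop} [Decidable p] [Decidable q] [Decidable r] (x y z : ℤ) :
    (((if p then {(1, x)} else ∅) ∪ ((if q then {(2, y)} else ∅) ∪ (if r then {(3, z)} else ∅)) :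
      Finset (ℤ × ℤ)).card : ℤ) =
      (if p then 1 else 0) + ((if q then 1 else 0) + (if r then 1 else 0)) := by
  split_ifs <;> simp

lemma mem_ite_one {p : Prop} [Decidable p] (i j k l : ℤ) :
    (i, j) ∈ (if p then {(k, l)} else ∅ : Finset (ℤ × ℤ)) ↔ p ∧ i = k ∧ j = l := by
  split_ifs with h <;> simp [h]

def f2 (n x y : ℤ) : ℤ :=
  if x = 0 then 2 * n - 2 else 2 * x + (if y < x then 2 * y else n)

lemma case2 {b : ℤ} (hab : 2 ≤ b) {I : Finset (ℤ × ℤ)} (hI : IsIdeal (trap 2 b) I) :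
    f2 (2 + b) (ht 1 (gen (trap 2 b) (mins (trap 2 b) I)))
        (ht 2 (gen (trap 2 b) (mins (trap 2 b) I)))
      - f2 (2 + b) (ht 1 I) (ht 2 I) =
      (2 + b) * ((mins (trap 2 b) I).card : ℤ) - 2 * b := by
  obtain ⟨x, hx, hx1, hx2, mx⟩ := ht_spec (i := 1) le_rfl (by norm_num) hab hI
  obtain ⟨y, hy, hy1, hy2, my⟩ := ht_spec (i := 2) (by norm_num) le_rfl hab hI
  have hxy : y = 1 ∨ y ≤ x := by
    by_contra hcon
    have h1 : (2, y) ∈ I := (my y).2 (by omega)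
    have h2 : (1, y) ∈ I := hI.2 _ h1 _ (mem_trap.2 (by omega))
      (Prod.mk_le_mk.2 ⟨by norm_num, le_rfl⟩)
    rw [mx] at h2
    omega
  have hm : mins (trap 2 b) I = (if x ≤ b then {(1, x + 1)} else ∅) ∪
      (if y + 1 ≤ x ∧ y + 1 ≤ b then {(2, y + 1)} else ∅) := by
    ext ⟨i, j⟩
    rw [mem_mins, Finset.mem_union, mem_ite_one, mem_ite_one]
    constructor
    · rintro ⟨h1, h2, h3⟩
      obtain rfl | rfl : i = 1 ∨ i = 2 := by omega
      · rw [mx] at h2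
        have := h3 1 (x + 1) (by omega) (by rw [mx]; omega) (by omega) (by omega)
        omega
      · rw [my] at h2
        have := h3 2 (y + 1) (by omega) (by rw [my]; omega) (by omega) (by omega)
        have := h3 1 j (by omega)
        rw [mx] at this
        omega
    · rintro (⟨hc, rfl, rfl⟩ | ⟨hc, rfl, rfl⟩)
      · refine ⟨by omega, by rw [mx]; omega, fun k l h1 h2 h3 h4 => ?_⟩
        obtain rfl : k = 1 := by omega
        rw [mx] at h2
        omega
      · refine ⟨by omega, by rw [my]; omega, fun k l h1 h2 h3 h4 => ?_⟩
        obtain rfl | rfl : k = 1 ∨ k = 2 := by omega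
        · rw [mx] at h2
          omega
        · rw [my] at h2
          omega
  have mg : ∀ i j, (i, j) ∈ gen (trap 2 b) (mins (trap 2 b) I) ↔
      (1 ≤ i ∧ i ≤ 2 ∧ i ≤ j ∧ j ≤ 2 + b - i) ∧ ((x ≤ b ∧ i ≤ 1 ∧ j ≤ x + 1) ∨
        ((y + 1 ≤ x ∧ y + 1 ≤ b) ∧ i ≤ 2 ∧ j ≤ y + 1)) := by
    intro i j
    rw [mem_gen, hm]
    refine and_congr_right fun _ => ?_
    simp only [Finset.mem_union, mem_ite_one]
    constructor
    · rintro ⟨k, l, h, h1, h2⟩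
      omega
    · rintro (h | h)
      · exact ⟨1, x + 1, by simp [h.1], h.2⟩
      · exact ⟨2, y + 1, by simp [h.1], h.2⟩
  have hg2 : ht 2 (gen (trap 2 b) (mins (trap 2 b) I)) =
      if y + 1 ≤ x ∧ y + 1 ≤ b then y + 1 else 1 := by
    apply ht_eq
    · split_ifs <;> omega
    · intro j
      rw [mg]
      split_ifs <;> omega
  have hg1 : ht 1 (gen (trap 2 b) (mins (trap 2 b) I)) =
      if x ≤ b then x + 1 else if y + 1 ≤ x ∧ y + 1 ≤ b then y + 1 else 0 := by
    apply ht_eq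
    · split_ifs <;> omega
    · intro j
      rw [mg]
      split_ifs <;> omega
  rw [hg1, hg2, hx, hy, hm, card_two]
  clear hg1 hg2 mg hm mx my hx hy hI
  unfold f2
  split_ifs <;> ring_nf <;> omega

def f3 (n x y z : ℤ) : ℤ :=
  if x = 0 then 6 * n - 9 else
  if y = 1 ∧ 2 ≤ x then 3 * x + (if x = n - 1 then 3 * n - 3 else 2 * n + 3) else
  3 * x + (if y < x then 3 * y else 2 * n) +
    (if z < y then 3 * z else if y < x then n + 3 else 2 * n - 3)

set_option maxHeartbeats 2000000 in
lemma case3 {b : ℤ} (hab : 3 ≤ b) {I : Finset (ℤ × ℤ)} (hI : IsIdeal (trap 3 b) I) :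
    f3 (3 + b) (ht 1 (gen (trap 3 b) (mins (trap 3 b) I)))
        (ht 2 (gen (trap 3 b) (mins (trap 3 b) I))) (ht 3 (gen (trap 3 b) (mins (trap 3 b) I)))
      - f3 (3 + b) (ht 1 I) (ht 2 I) (ht 3 I) =
      (3 + b) * ((mins (trap 3 b) I).card : ℤ) - 3 * b := by
  obtain ⟨x, hx, hx1, hx2, mx⟩ := ht_spec (i := 1) le_rfl (by norm_num) hab hI
  obtain ⟨y, hy, hy1, hy2, my⟩ := ht_spec (i := 2) (by norm_num) (by norm_num) hab hI
  obtain ⟨z, hz, hz1, hz2, mz⟩ := ht_spec (i := 3) (by norm_num) le_rfl hab hI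
  have hxy : y = 1 ∨ y ≤ x := by
    by_contra hcon
    have h1 : (2, y) ∈ I := (my y).2 (by omega)
    have h2 : (1, y) ∈ I := hI.2 _ h1 _ (mem_trap.2 (by omega))
      (Prod.mk_le_mk.2 ⟨by norm_num, le_rfl⟩)
    rw [mx] at h2
    omega
  have hyz : z = 2 ∨ z ≤ y := by
    by_contra hcon
    have h1 : (3, z) ∈ I := (mz z).2 (by omega)
    have h2 : (2, z) ∈ I := hI.2 _ h1 _ (mem_trap.2 (by omega))
      (Prod.mk_le_mk.2 ⟨by norm_num, le_rfl⟩)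
    rw [my] at h2
    omega
  have hm : mins (trap 3 b) I = (if x ≤ b + 1 then {(1, x + 1)} else ∅) ∪
      ((if y + 1 ≤ x ∧ y ≤ b then {(2, y + 1)} else ∅) ∪
       (if z + 1 ≤ y ∧ z + 1 ≤ b then {(3, z + 1)} else ∅)) := by
    ext ⟨i, j⟩
    rw [mem_mins, Finset.mem_union, Finset.mem_union, mem_ite_one, mem_ite_one, mem_ite_one]
    constructor
    · rintro ⟨h1, h2, h3⟩
      obtain rfl | rfl | rfl : i = 1 ∨ i = 2 ∨ i = 3 := by omega
      · rw [mx] at h2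
        have := h3 1 (x + 1) (by omega) (by rw [mx]; omega) (by omega) (by omega)
        omega
      · rw [my] at h2
        have := h3 2 (y + 1) (by omega) (by rw [my]; omega) (by omega) (by omega)
        have := h3 1 j (by omega)
        rw [mx] at this
        omega
      · rw [mz] at h2
        have := h3 3 (z + 1) (by omega) (by rw [mz]; omega) (by omega) (by omega)
        have := h3 2 j (by omega)
        rw [my] at this
        omega
    · rintro (⟨hc, rfl, rfl⟩ | ⟨hc, rfl, rfl⟩ | ⟨hc, rfl, rfl⟩)
      · refine ⟨by omega, by rw [mx]; omega, fun k l h1 h2 h3 h4 => ?_⟩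
        obtain rfl : k = 1 := by omega
        rw [mx] at h2
        omega
      · refine ⟨by omega, by rw [my]; omega, fun k l h1 h2 h3 h4 => ?_⟩
        obtain rfl | rfl : k = 1 ∨ k = 2 := by omega
        · rw [mx] at h2
          omega
        · rw [my] at h2
          omega
      · refine ⟨by omega, by rw [mz]; omega, fun k l h1 h2 h3 h4 => ?_⟩
        obtain rfl | rfl | rfl : k = 1 ∨ k = 2 ∨ k = 3 := by omega
        · rw [mx] at h2
          omega
        · rw [my] at h2
          omega
        · rw [mz] at h2
          omega
  have mg : ∀ i j, (i, j) ∈ gen (trap 3 b) (mins (trap 3 b) I) ↔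
      (1 ≤ i ∧ i ≤ 3 ∧ i ≤ j ∧ j ≤ 3 + b - i) ∧ ((x ≤ b + 1 ∧ i ≤ 1 ∧ j ≤ x + 1) ∨
        ((y + 1 ≤ x ∧ y ≤ b) ∧ i ≤ 2 ∧ j ≤ y + 1) ∨
        ((z + 1 ≤ y ∧ z + 1 ≤ b) ∧ i ≤ 3 ∧ j ≤ z + 1)) := by
    intro i j
    rw [mem_gen, hm]
    refine and_congr_right fun _ => ?_
    simp only [Finset.mem_union, mem_ite_one]
    constructor
    · rintro ⟨k, l, h, h1, h2⟩
      omega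
    · rintro (h | h | h)
      · exact ⟨1, x + 1, by simp [h.1], h.2⟩
      · exact ⟨2, y + 1, by simp [h.1], h.2⟩
      · exact ⟨3, z + 1, by simp [h.1], h.2⟩
  have hg3 : ∃ z', ht 3 (gen (trap 3 b) (mins (trap 3 b) I)) = z' ∧
      ((z + 1 ≤ y ∧ z + 1 ≤ b ∧ z' = z + 1) ∨ (¬ (z + 1 ≤ y ∧ z + 1 ≤ b) ∧ z' = 2)) := by
    refine ⟨if z + 1 ≤ y ∧ z + 1 ≤ b then z + 1 else 2, ht_eq ?_ ?_, ?_⟩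
    · split_ifs <;> omega
    · intro j
      rw [mg]
      split_ifs <;> omega
    · split_ifs <;> omega
  obtain ⟨z', hz', ez⟩ := hg3
  have hg2 : ∃ y', ht 2 (gen (trap 3 b) (mins (trap 3 b) I)) = y' ∧
      ((y + 1 ≤ x ∧ y ≤ b ∧ y' = y + 1) ∨ (¬ (y + 1 ≤ x ∧ y ≤ b) ∧
        ((z' = 2 ∧ y' = 1) ∨ (3 ≤ z' ∧ y' = z')))) := by
    refine ⟨if y + 1 ≤ x ∧ y ≤ b then y + 1 else if z' = 2 then 1 else z', ht_eq ?_ ?_, ?_⟩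
    · split_ifs <;> omega
    · intro j
      rw [mg]
      split_ifs <;> omega
    · split_ifs <;> omega
  obtain ⟨y', hy', ey⟩ := hg2
  have hg1 : ∃ x', ht 1 (gen (trap 3 b) (mins (trap 3 b) I)) = x' ∧
      ((x ≤ b + 1 ∧ x' = x + 1) ∨ (b + 1 < x ∧
        ((y' = 1 ∧ x' = 0) ∨ (2 ≤ y' ∧ x' = y')))) := by
    refine ⟨if x ≤ b + 1 then x + 1 else if y' = 1 then 0 else y', ht_eq ?_ ?_, ?_⟩
    · split_ifs <;> omega
    · intro j
      rw [mg]
      split_ifs <;> omega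
    · split_ifs <;> omega
  obtain ⟨x', hx', ex⟩ := hg1
  have hcard : ∃ u v w : ℤ, ((mins (trap 3 b) I).card : ℤ) = u + (v + w) ∧
      ((x ≤ b + 1 ∧ u = 1) ∨ (b + 1 < x ∧ u = 0)) ∧
      ((y + 1 ≤ x ∧ y ≤ b ∧ v = 1) ∨ (¬ (y + 1 ≤ x ∧ y ≤ b) ∧ v = 0)) ∧
      ((z + 1 ≤ y ∧ z + 1 ≤ b ∧ w = 1) ∨ (¬ (z + 1 ≤ y ∧ z + 1 ≤ b) ∧ w = 0)) := by
    refine ⟨_, _, _, by rw [hm, card_three], ?_, ?_, ?_⟩ <;> split_ifs <;> omega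
  obtain ⟨u, v, w, hcard, eu, ev, ew⟩ := hcard
  rw [hx', hy', hz', hx, hy, hz, hcard]
  clear hcard hx' hy' hz' mg hm mx my mz hx hy hz hI
  unfold f3
  rcases eu with ⟨_, rfl⟩ | ⟨_, rfl⟩ <;> rcases ev with ⟨_, _, rfl⟩ | ⟨_, rfl⟩ <;>
    rcases ew with ⟨_, _, rfl⟩ | ⟨_, rfl⟩ <;> ring_nf <;> omega

/-- The expected down-degree is `ab/(a+b)` for any toggle-on-antichains-symmetric
distribution on the order ideals of `𝓣(a,b)` with `a ≤ 3`. -/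
theorem expected_ddeg_eq (a b : ℤ) (ha : 1 ≤ a) (ha3 : a ≤ 3) (hab : a ≤ b)
    (μ : Finset (ℤ × ℤ) → ℝ) (hμ : IsDistribution (trap a b) μ)
    (hsym : ToggleAntichainSymmetric (trap a b) μ) :
    expect (trap a b) μ (fun I => (ddeg I : ℝ)) = (a : ℝ) * b / (a + b) := by
  have hn : (a : ℝ) + b ≠ 0 := by
    have : (0 : ℤ) < a + b := by omega
    have h : (0 : ℝ) < ((a + b : ℤ) : ℝ) := by exact_mod_cast this
    push_cast at h
    exact h.ne'
  rw [eq_div_iff hn, mul_comm]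
  obtain rfl | rfl | rfl : a = 1 ∨ a = 2 ∨ a = 3 := by omega
  · refine homomesy hμ hsym (fun I => ((ht 1 I : ℤ) : ℝ)) _ _ fun I hI => ?_
    have := case1 hab hI
    rw [← Int.cast_sub, this]
    push_cast
    ring
  · refine homomesy hμ hsym (fun I => ((f2 (2 + b) (ht 1 I) (ht 2 I) : ℤ) : ℝ)) _ _ fun I hI => ?_
    have := case2 hab hI
    rw [← Int.cast_sub, this]
    push_cast
    ring
  · refine homomesy hμ hsym
      (fun I => ((f3 (3 + b) (ht 1 I) (ht 2 I) (ht 3 I) : ℤ) : ℝ)) _ _ fun I hI => ?_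
    have := case3 hab hI
    rw [← Int.cast_sub, this]
    push_cast
    ring

end Stmt10
end
end

section
/- Let 1 ≤ a ≤ 3 and a ≤ b. Down-degree is homomesic with respect to rowmotion on J(𝓣(a,b)): for every order ideal I of 𝓣(a,b) and every n ≥ 1 with row^n(I) = I, the orbit average (1/n) Σ_{k=0}^{n−1} ddeg(row^k(I)) equals ab/(a+b). -/
/-!
STATEMENT 11: For 1 ≤ a ≤ 3 and a ≤ b, down-degree is homomesic with respect
to rowmotion on J(𝓣(a,b)): every rowmotion orbit has average down-degree ab/(a+b).
-/

open scoped Classical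

noncomputable section

namespace Stmt11

/-- The trapezoid poset `𝓣(a,b) = {(i,j) : 1 ≤ i ≤ a, i ≤ j ≤ a+b-i}`,
as a finite subset of `ℤ × ℤ` with the componentwise order. -/
def trap (a b : ℤ) : Finset (ℤ × ℤ) :=
  (Finset.Icc (1, 1) (a, a + b - 1)).filter (fun p => p.1 ≤ p.2 ∧ p.2 ≤ a + b - p.1)

/-- `I` is an order ideal of the poset with ground set `P ⊆ ℤ × ℤ`. -/
def IsIdeal (P I : Finset (ℤ × ℤ)) : Prop :=
  I ⊆ P ∧ ∀ x ∈ I, ∀ y ∈ P, y ≤ x → y ∈ I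

/-- `J(P)`: the set of order ideals of `P`. -/
def ideals (P : Finset (ℤ × ℤ)) : Finset (Finset (ℤ × ℤ)) :=
  P.powerset.filter (fun I => IsIdeal P I)

/-- The down-degree of `I`: the number of maximal elements of `I`. -/
def ddeg (I : Finset (ℤ × ℤ)) : ℕ :=
  (I.filter (fun x => ∀ y ∈ I, x ≤ y → x = y)).card

/-- `𝒯_A⁺(I) = 1` if `A ∩ I = ∅` and `I ∪ A` is an order ideal, else `0`. -/
def togPlus (P A I : Finset (ℤ × ℤ)) : ℝ :=
  if (∀ x ∈ A, x ∉ I) ∧ IsIdeal P (I ∪ A) then 1 else 0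

/-- `𝒯_A⁻(I) = 1` if `A ⊆ I` and `I \ A` is an order ideal, else `0`. -/
def togMinus (P A I : Finset (ℤ × ℤ)) : ℝ :=
  if A ⊆ I ∧ IsIdeal P (I \ A) then 1 else 0

/-- `𝒯_A = 𝒯_A⁺ − 𝒯_A⁻`. -/
def tog (P A I : Finset (ℤ × ℤ)) : ℝ := togPlus P A I - togMinus P A I

/-- Expectation of the statistic `f` with respect to `μ` on `J(P)`. -/
def expect (P : Finset (ℤ × ℤ)) (μ : Finset (ℤ × ℤ) → ℝ) (f : Finset (ℤ × ℤ) → ℝ) : ℝ :=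
  ∑ I ∈ ideals P, μ I * f I

/-- `μ` is a probability distribution on `J(P)`. -/
def IsDistribution (P : Finset (ℤ × ℤ)) (μ : Finset (ℤ × ℤ) → ℝ) : Prop :=
  (∀ I ∈ ideals P, 0 ≤ μ I) ∧ ∑ I ∈ ideals P, μ I = 1

/-- `μ` is toggle-on-antichains-symmetric: `E[μ; 𝒯_A] = 0` for every antichain `A ⊆ P`. -/
def ToggleAntichainSymmetric (P : Finset (ℤ × ℤ)) (μ : Finset (ℤ × ℤ) → ℝ) : Prop :=
  ∀ A : Finset (ℤ × ℤ), A ⊆ P → IsAntichain (· ≤ ·) (A : Set (ℤ × ℤ)) →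
    expect P μ (tog P A) = 0

/-- `μ` is toggle-symmetric: `E[μ; 𝒯_p⁺ − 𝒯_p⁻] = 0` for every `p ∈ P`. -/
def ToggleSymmetric (P : Finset (ℤ × ℤ)) (μ : Finset (ℤ × ℤ) → ℝ) : Prop :=
  ∀ p ∈ P, expect P μ (tog P {p}) = 0


/-- Rowmotion on order ideals of the poset with ground set `P`:
`row P I` is the order ideal generated by the minimal elements of `P \ I`. -/
def row (P I : Finset (ℤ × ℤ)) : Finset (ℤ × ℤ) :=
  P.filter (fun x => ∃ m ∈ P, m ∉ I ∧ (∀ y ∈ P, y ∉ I → y ≤ m → y = m) ∧ x ≤ m)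

/-- `S` consists of rows `1,2,3` ending at `p,q,r`. -/
def Rws (S : Finset (ℤ × ℤ)) (p q r : ℤ) : Prop :=
  ∀ i j : ℤ, (i, j) ∈ S ↔ (i = 1 ∧ 1 ≤ j ∧ j ≤ p) ∨ (i = 2 ∧ 2 ≤ j ∧ j ≤ q) ∨
    (i = 3 ∧ 3 ≤ j ∧ j ≤ r)

/-- Valid row ends. -/
def Vld (c1 c2 c3 p q r : ℤ) : Prop :=
  0 ≤ p ∧ p ≤ c1 ∧ 1 ≤ q ∧ q ≤ c2 ∧ 2 ≤ r ∧ r ≤ c3 ∧ (2 ≤ q → q ≤ p) ∧ (3 ≤ r → r ≤ q)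

lemma row_end (S : ℤ → Prop) (l c : ℤ) (hlc : l - 1 ≤ c) (h1 : ∀ j, S j → l ≤ j ∧ j ≤ c)
    (h2 : ∀ j k, S k → l ≤ j → j ≤ k → S j) :
    ∃ p, l - 1 ≤ p ∧ p ≤ c ∧ ∀ j, S j ↔ l ≤ j ∧ j ≤ p := by
  by_cases hne : ∃ j, S j
  · obtain ⟨p, hp, hm⟩ := Int.exists_greatest_of_bdd ⟨c, fun z hz => (h1 z hz).2⟩ hne
    refine ⟨p, by have := h1 p hp; omega, (h1 p hp).2, fun j => ⟨fun h => ⟨(h1 j h).1, hm j h⟩,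
      fun h => h2 j p hp h.1 h.2⟩⟩
  · refine ⟨l - 1, le_refl _, hlc, fun j => ⟨fun h => (hne ⟨j, h⟩).elim, fun h => by omega⟩⟩

lemma exists_rws {P I : Finset (ℤ × ℤ)} {c1 c2 c3 : ℤ} (hP : Rws P c1 c2 c3)
    (hc : Vld c1 c2 c3 c1 c2 c3) (hI : IsIdeal P I) :
    ∃ p q r, Rws I p q r ∧ Vld c1 c2 c3 p q r := by
  obtain ⟨hs, hd⟩ := hI
  obtain ⟨g1, g2, g3, g4, g5, g6, g7, g8⟩ := hc
  have key : ∀ i j k : ℤ, (i, k) ∈ I → (i, j) ∈ P → j ≤ k → (i, j) ∈ I := fun i j k h1 h2 h3 =>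
    hd _ h1 _ h2 (Prod.mk_le_mk.2 ⟨le_refl _, h3⟩)
  have key2 : ∀ i i' k : ℤ, (i, k) ∈ I → (i', k) ∈ P → i' ≤ i → (i', k) ∈ I :=
    fun i i' k h1 h2 h3 => hd _ h1 _ h2 (Prod.mk_le_mk.2 ⟨h3, le_refl _⟩)
  have mem : ∀ i j : ℤ, (i, j) ∈ I → (i = 1 ∧ 1 ≤ j ∧ j ≤ c1) ∨ (i = 2 ∧ 2 ≤ j ∧ j ≤ c2) ∨
    (i = 3 ∧ 3 ≤ j ∧ j ≤ c3) := fun i j h => (hP i j).1 (hs h)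
  obtain ⟨p, p1, p2, p3⟩ := row_end (fun j => (1, j) ∈ I) 1 c1 (by omega)
    (fun j h => by have := mem 1 j h; omega)
    (fun j k h h1 h2 => key 1 j k h ((hP _ _).2 (by have := mem 1 k h; omega)) h2)
  obtain ⟨q, q1, q2, q3⟩ := row_end (fun j => (2, j) ∈ I) 2 c2 (by omega)
    (fun j h => by have := mem 2 j h; omega)
    (fun j k h h1 h2 => key 2 j k h ((hP _ _).2 (by have := mem 2 k h; omega)) h2)
  obtain ⟨r, r1, r2, r3⟩ := row_end (fun j => (3, j) ∈ I) 3 c3 (by omega)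
    (fun j h => by have := mem 3 j h; omega)
    (fun j k h h1 h2 => key 3 j k h ((hP _ _).2 (by have := mem 3 k h; omega)) h2)
  refine ⟨p, q, r, ?_, by omega, p2, by omega, q2, by omega, r2, ?_, ?_⟩
  · intro i j
    constructor
    · intro h
      rcases mem i j h with h1 | h1 | h1
      · obtain ⟨rfl, -⟩ := h1
        have := (p3 j).1 h; omega
      · obtain ⟨rfl, -⟩ := h1
        have := (q3 j).1 h; omega
      · obtain ⟨rfl, -⟩ := h1
        have := (r3 j).1 h; omega
    · rintro (⟨rfl, h⟩ | ⟨rfl, h⟩ | ⟨rfl, h⟩)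
      · exact (p3 j).2 h
      · exact (q3 j).2 h
      · exact (r3 j).2 h
  · intro h
    have h1 : (2, q) ∈ I := (q3 q).2 ⟨h, le_refl _⟩
    have h2 : (1, q) ∈ I := key2 2 1 q h1 ((hP _ _).2 (by omega)) (by norm_num)
    exact ((p3 q).1 h2).2
  · intro h
    have h1 : (3, r) ∈ I := (r3 r).2 ⟨h, le_refl _⟩
    have h2 : (2, r) ∈ I := key2 3 2 r h1 ((hP _ _).2 (by omega)) (by norm_num)
    exact ((q3 r).1 h2).2

/-- Row `1` has a minimal non-element, and so on. -/
def N3 (c3 q r : ℤ) : Prop := r < c3 ∧ r < q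
def N2 (c2 p q : ℤ) : Prop := q < c2 ∧ q < p
def N1 (c1 p : ℤ) : Prop := p < c1

def s3 (c3 q r : ℤ) : ℤ := if N3 c3 q r then r + 1 else 2
def s2 (c2 c3 p q r : ℤ) : ℤ :=
  if N2 c2 p q then q + 1 else if N3 c3 q r then r + 1 else 1
def s1 (c1 c2 c3 p q r : ℤ) : ℤ :=
  if N1 c1 p then p + 1 else if N2 c2 p q then q + 1 else if N3 c3 q r then r + 1 else 0

lemma min_char {P I : Finset (ℤ × ℤ)} {c1 c2 c3 p q r : ℤ} (hP : Rws P c1 c2 c3)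
    (hc : Vld c1 c2 c3 c1 c2 c3) (hI : Rws I p q r) (hv : Vld c1 c2 c3 p q r) (i j : ℤ) :
    ((i, j) ∈ P ∧ (i, j) ∉ I ∧ (∀ y ∈ P, y ∉ I → y ≤ (i, j) → y = (i, j))) ↔
    (i = 1 ∧ j = p + 1 ∧ N1 c1 p) ∨ (i = 2 ∧ j = q + 1 ∧ N2 c2 p q) ∨
    (i = 3 ∧ j = r + 1 ∧ N3 c3 q r) := by
  simp only [Vld, N1, N2, N3] at *
  constructor
  · rintro ⟨h1, h2, h3⟩
    have h4 : ∀ i' j' : ℤ, (i', j') ∈ P → (i', j') ∉ I → i' ≤ i → j' ≤ j → i' = i ∧ j' = j := by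
      intro i' j' a1 a2 a3 a4
      have := h3 (i', j') a1 a2 (Prod.mk_le_mk.2 ⟨a3, a4⟩)
      simpa using this
    rw [hP] at h1
    rw [hI] at h2
    have e1 : p < c1 → 1 ≤ i → p + 1 ≤ j → 1 = i ∧ p + 1 = j := fun a1 =>
      h4 1 (p + 1) ((hP _ _).2 (by omega)) (fun h => by have := (hI _ _).1 h; omega)
    have e2 : q < c2 → 2 ≤ i → q + 1 ≤ j → 2 = i ∧ q + 1 = j := fun a1 =>
      h4 2 (q + 1) ((hP _ _).2 (by omega)) (fun h => by have := (hI _ _).1 h; omega)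
    have e3 : r < c3 → 3 ≤ i → r + 1 ≤ j → 3 = i ∧ r + 1 = j := fun a1 =>
      h4 3 (r + 1) ((hP _ _).2 (by omega)) (fun h => by have := (hI _ _).1 h; omega)
    clear h3 h4
    rcases h1 with ⟨h1, h5, h6⟩ | ⟨h1, h5, h6⟩ | ⟨h1, h5, h6⟩
    · have k1 : ¬ j ≤ p := fun h => h2 (by omega)
      clear h2 e2 e3
      omega
    · have k1 : ¬ j ≤ q := fun h => h2 (by omega)
      have k2 : j = q + 1 := by clear h2 e1 e3; omega
      have k3 : q < p := by
        by_contra hq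
        have := e1 (by omega) (by omega) (by omega)
        omega
      clear h2 e1 e2 e3
      omega
    · have k1 : ¬ j ≤ r := fun h => h2 (by omega)
      have k2 : j = r + 1 := by clear h2 e1 e2; omega
      have k3 : r < q := by
        by_contra hq
        have := e2 (by omega) (by omega) (by omega)
        omega
      clear h2 e1 e2 e3
      omega
  · intro h
    rw [hP, hI]
    refine ⟨by omega, by omega, ?_⟩
    rintro ⟨i', j'⟩ a1 a2 a3
    rw [hP] at a1
    rw [hI] at a2
    rw [Prod.mk_le_mk] at a3
    rw [Prod.mk.injEq]
    omega

lemma row_mem {P I : Finset (ℤ × ℤ)} {c1 c2 c3 p q r : ℤ} (hP : Rws P c1 c2 c3)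
    (hc : Vld c1 c2 c3 c1 c2 c3) (hI : Rws I p q r) (hv : Vld c1 c2 c3 p q r) (i j : ℤ) :
    (i, j) ∈ row P I ↔ (i, j) ∈ P ∧ ((i ≤ 1 ∧ j ≤ p + 1 ∧ N1 c1 p) ∨
        (i ≤ 2 ∧ j ≤ q + 1 ∧ N2 c2 p q) ∨ (i ≤ 3 ∧ j ≤ r + 1 ∧ N3 c3 q r)) := by
  have hmc := min_char hP hc hI hv
  unfold row
  rw [Finset.mem_filter]
  refine and_congr_right fun _ => ?_
  constructor
  · rintro ⟨⟨x, y⟩, h1, h2, h3, h4⟩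
    rw [Prod.mk_le_mk] at h4
    rcases (hmc x y).1 ⟨h1, h2, h3⟩ with ⟨e1, e2, h⟩ | ⟨e1, e2, h⟩ | ⟨e1, e2, h⟩
    · exact Or.inl ⟨by omega, by omega, h⟩
    · exact Or.inr (Or.inl ⟨by omega, by omega, h⟩)
    · exact Or.inr (Or.inr ⟨by omega, by omega, h⟩)
  · rintro (⟨h1, h2, h⟩ | ⟨h1, h2, h⟩ | ⟨h1, h2, h⟩)
    · obtain ⟨a1, a2, a3⟩ := (hmc 1 (p + 1)).2 (Or.inl ⟨rfl, rfl, h⟩)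
      exact ⟨(1, p + 1), a1, a2, a3, Prod.mk_le_mk.2 ⟨h1, h2⟩⟩
    · obtain ⟨a1, a2, a3⟩ := (hmc 2 (q + 1)).2 (Or.inr (Or.inl ⟨rfl, rfl, h⟩))
      exact ⟨(2, q + 1), a1, a2, a3, Prod.mk_le_mk.2 ⟨h1, h2⟩⟩
    · obtain ⟨a1, a2, a3⟩ := (hmc 3 (r + 1)).2 (Or.inr (Or.inr ⟨rfl, rfl, h⟩))
      exact ⟨(3, r + 1), a1, a2, a3, Prod.mk_le_mk.2 ⟨h1, h2⟩⟩

lemma step_vld {c1 c2 c3 p q r : ℤ}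
    (hc : Vld c1 c2 c3 c1 c2 c3) (hv : Vld c1 c2 c3 p q r) :
    Vld c1 c2 c3 (s1 c1 c2 c3 p q r) (s2 c2 c3 p q r) (s3 c3 q r) := by
  by_cases n1 : N1 c1 p <;> by_cases n2 : N2 c2 p q <;> by_cases n3 : N3 c3 q r <;>
    simp only [s1, s2, s3, n1, n2, n3, if_true, if_false] <;>
    simp only [N1, N2, N3, Vld] at * <;>
    refine ⟨?_, ?_, ?_, ?_, ?_, ?_, ?_, ?_⟩ <;> omega

set_option maxHeartbeats 2000000 in
lemma row_rws {P I : Finset (ℤ × ℤ)} {c1 c2 c3 p q r : ℤ} (hP : Rws P c1 c2 c3)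
    (hc : Vld c1 c2 c3 c1 c2 c3) (hI : Rws I p q r) (hv : Vld c1 c2 c3 p q r) :
    Rws (row P I) (s1 c1 c2 c3 p q r) (s2 c2 c3 p q r) (s3 c3 q r) ∧
    Vld c1 c2 c3 (s1 c1 c2 c3 p q r) (s2 c2 c3 p q r) (s3 c3 q r) := by
  refine ⟨?_, step_vld hc hv⟩
  intro i j
  rw [row_mem hP hc hI hv, hP]
  clear hP hI
  by_cases n1 : N1 c1 p <;> by_cases n2 : N2 c2 p q <;> by_cases n3 : N3 c3 q r <;>
    simp only [s1, s2, s3, n1, n2, n3, if_true, if_false, and_true, and_false, or_false,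
      false_or] <;>
    simp only [N1, N2, N3, Vld] at * <;>
    constructor <;> intro h <;> first | exact h.elim | omega

def M1 (p q : ℤ) : Prop := 1 ≤ p ∧ (q < 2 ∨ q < p)
def M2 (q r : ℤ) : Prop := 2 ≤ q ∧ (r < 3 ∨ r < q)
def M3 (r : ℤ) : Prop := 3 ≤ r

def dd (p q r : ℤ) : ℤ :=
  (if M1 p q then 1 else 0) + (if M2 q r then 1 else 0) + (if M3 r then 1 else 0)

lemma ddeg_eq {I : Finset (ℤ × ℤ)} {c1 c2 c3 p q r : ℤ}
    (hI : Rws I p q r) (hv : Vld c1 c2 c3 p q r) : (ddeg I : ℤ) = dd p q r := by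
  have hset : I.filter (fun x => ∀ y ∈ I, x ≤ y → x = y) =
      (if M1 p q then {((1 : ℤ), p)} else ∅) ∪ ((if M2 q r then {((2 : ℤ), q)} else ∅) ∪
        (if M3 r then {((3 : ℤ), r)} else ∅)) := by
    ext ⟨i, j⟩
    have hR : (i, j) ∈ (if M1 p q then {((1 : ℤ), p)} else ∅) ∪
        ((if M2 q r then {((2 : ℤ), q)} else ∅) ∪
        (if M3 r then {((3 : ℤ), r)} else (∅ : Finset (ℤ × ℤ)))) ↔
        (i = 1 ∧ j = p ∧ M1 p q) ∨ (i = 2 ∧ j = q ∧ M2 q r) ∨ (i = 3 ∧ j = r ∧ M3 r) := by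
      rw [Finset.mem_union, Finset.mem_union]
      split_ifs <;> simp [*]
    rw [hR, Finset.mem_filter]
    simp only [Vld, M1, M2, M3] at *
    constructor
    · rintro ⟨h1, h3⟩
      have h4 : ∀ i' j' : ℤ, (i', j') ∈ I → i ≤ i' → j ≤ j' → i = i' ∧ j = j' := by
        intro i' j' a1 a3 a4
        have := h3 (i', j') a1 (Prod.mk_le_mk.2 ⟨a3, a4⟩)
        simpa using this
      rw [hI] at h1
      have e1 := h4 1 p
      have e2 := h4 2 q
      have e3 := h4 3 r
      rw [hI] at e1 e2 e3
      rcases h1 with h1 | h1 | h1 <;> obtain ⟨rfl, h1⟩ := h1 <;> omega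
    · intro h
      rw [hI]
      refine ⟨by omega, ?_⟩
      rintro ⟨i', j'⟩ a1 a3
      rw [hI] at a1
      rw [Prod.mk_le_mk] at a3
      rw [Prod.mk.injEq]
      omega
  unfold ddeg dd
  rw [hset]
  split_ifs <;> simp

lemma rws_unique {I : Finset (ℤ × ℤ)} {c1 c2 c3 p q r p' q' r' : ℤ}
    (hI : Rws I p q r) (hv : Vld c1 c2 c3 p q r) (hI' : Rws I p' q' r')
    (hv' : Vld c1 c2 c3 p' q' r') : p = p' ∧ q = q' ∧ r = r' := by
  simp only [Vld] at *
  have h1 := (hI 1 p).symm.trans (hI' 1 p)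
  have h2 := (hI 1 p').symm.trans (hI' 1 p')
  have h3 := (hI 2 q).symm.trans (hI' 2 q)
  have h4 := (hI 2 q').symm.trans (hI' 2 q')
  have h5 := (hI 3 r).symm.trans (hI' 3 r)
  have h6 := (hI 3 r').symm.trans (hI' 3 r')
  norm_num at h1 h2 h3 h4 h5 h6
  refine ⟨by omega, by omega, by omega⟩

lemma telescope {P : Finset (ℤ × ℤ)} {c1 c2 c3 N c : ℤ} (hP : Rws P c1 c2 c3)
    (hc : Vld c1 c2 c3 c1 c2 c3) (G : ℤ → ℤ → ℤ → ℤ)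
    (hG : ∀ p q r, Vld c1 c2 c3 p q r →
      G (s1 c1 c2 c3 p q r) (s2 c2 c3 p q r) (s3 c3 q r) - G p q r = N * dd p q r - c)
    (I : Finset (ℤ × ℤ)) (hI : IsIdeal P I) (n : ℕ) (hfix : (row P)^[n] I = I) :
    N * ∑ k ∈ Finset.range n, (ddeg ((row P)^[k] I) : ℤ) = c * n := by
  obtain ⟨p, q, r, h1, h2⟩ := exists_rws hP hc hI
  have main : ∀ m : ℕ, ∃ p' q' r', Rws ((row P)^[m] I) p' q' r' ∧ Vld c1 c2 c3 p' q' r' ∧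
      N * ∑ k ∈ Finset.range m, (ddeg ((row P)^[k] I) : ℤ) = c * m + G p' q' r' - G p q r := by
    intro m
    induction m with
    | zero => exact ⟨p, q, r, h1, h2, by simp⟩
    | succ m ih =>
      obtain ⟨p', q', r', g1, g2, g3⟩ := ih
      obtain ⟨k1, k2⟩ := row_rws hP hc g1 g2
      rw [Function.iterate_succ_apply']
      refine ⟨_, _, _, k1, k2, ?_⟩
      rw [Finset.sum_range_succ, mul_add, g3, ddeg_eq g1 g2]
      have := hG _ _ _ g2
      push_cast
      linarith
  obtain ⟨p', q', r', g1, g2, g3⟩ := main n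
  rw [hfix] at g1
  obtain ⟨rfl, rfl, rfl⟩ := rws_unique h1 h2 g1 g2
  linarith

lemma trap_rws (a b : ℤ) (ha : 1 ≤ a) (ha3 : a ≤ 3) (hab : a ≤ b) :
    Rws (trap a b) (a + b - 1) (if 2 ≤ a then a + b - 2 else 1) (if 3 ≤ a then a + b - 3 else 2) := by
  intro i j
  unfold trap
  rw [Finset.mem_filter, Finset.mem_Icc, Prod.mk_le_mk, Prod.mk_le_mk]
  dsimp only
  split_ifs <;> omega

def G1 (b p : ℤ) : ℤ := if 1 ≤ p then p else b + 1

def G2 (b p q : ℤ) : ℤ :=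
  if 2 ≤ q then (if q < p then 2 * p + 2 * q else 2 * b + 2 * q + 4)
  else if 2 ≤ p then b + 2 * p + 4 else if p = 1 then 2 * b + 6 else 4 * b + 6

def G3 (b p q r : ℤ) : ℤ :=
  if 3 ≤ r then
    (if r < q then
      (if q < p then 3 * (p + q + r) else 3 * (b + q + r) + 9)
    else (if q < p then 2 * b + 3 * p + 3 * r + 9 else 6 * b + 3 * r + 15))
  else if 2 ≤ q then
    (if q < p then (if 3 ≤ q then b + 3 * p + 3 * q + 9 else 2 * b + 3 * p + 15)
      else (if 3 ≤ q then 4 * b + 3 * q + 18 else 6 * b + 21))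
  else if p = 0 then 9 * b + 18 else if p = 1 then 6 * b + 18
  else if p = b + 2 then 8 * b + 18 else 4 * b + 3 * p + 15

set_option maxHeartbeats 4000000 in
lemma step1 (b p q r : ℤ) (hb : 1 ≤ b) (hv : Vld (1 + b - 1) (1) (2) p q r) :
    G1 b (s1 (1 + b - 1) (1) (2) p q r) - G1 b p = (1 + b) * dd p q r - 1 * b := by
  generalize hp : s1 (1 + b - 1) (1) (2) p q r = p'
  generalize hq : s2 (1) (2) p q r = q'
  generalize hr : s3 (2) q r = r'
  generalize hd : dd p q r = d
  generalize hg : G1 b p = g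
  generalize hg' : G1 b p' = g'
  simp only [Vld] at hv
  by_cases n1 : N1 (1 + b - 1) p <;> by_cases n2 : N2 (1) p q <;>
    by_cases n3 : N3 (2) q r <;>
    simp only [s1, s2, s3, n1, n2, n3, if_true, if_false] at hp hq hr <;>
    simp only [N1, N2, N3] at n1 n2 n3 <;> (try (exfalso; omega)) <;>
    by_cases m1 : M1 p q <;> by_cases m2 : M2 q r <;> by_cases m3 : M3 r <;>
    simp only [dd, m1, m2, m3, if_true, if_false] at hd <;>
    simp only [M1, M2, M3] at m1 m2 m3 <;> (try (exfalso; omega)) <;>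
    subst hd <;> norm_num <;>
    simp only [G1] at hg <;> split_ifs at hg <;> (try (exfalso; omega)) <;>
    simp only [G1] at hg' <;> split_ifs at hg' <;> omega

set_option maxHeartbeats 4000000 in
lemma step2 (b p q r : ℤ) (hb : 2 ≤ b) (hv : Vld (2 + b - 1) (2 + b - 2) (2) p q r) :
    G2 b (s1 (2 + b - 1) (2 + b - 2) (2) p q r) (s2 (2 + b - 2) (2) p q r) - G2 b p q = (2 + b) * dd p q r - 2 * b := by
  generalize hp : s1 (2 + b - 1) (2 + b - 2) (2) p q r = p'
  generalize hq : s2 (2 + b - 2) (2) p q r = q'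
  generalize hr : s3 (2) q r = r'
  generalize hd : dd p q r = d
  generalize hg : G2 b p q = g
  generalize hg' : G2 b p' q' = g'
  simp only [Vld] at hv
  by_cases n1 : N1 (2 + b - 1) p <;> by_cases n2 : N2 (2 + b - 2) p q <;>
    by_cases n3 : N3 (2) q r <;>
    simp only [s1, s2, s3, n1, n2, n3, if_true, if_false] at hp hq hr <;>
    simp only [N1, N2, N3] at n1 n2 n3 <;> (try (exfalso; omega)) <;>
    by_cases m1 : M1 p q <;> by_cases m2 : M2 q r <;> by_cases m3 : M3 r <;>
    simp only [dd, m1, m2, m3, if_true, if_false] at hd <;>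
    simp only [M1, M2, M3] at m1 m2 m3 <;> (try (exfalso; omega)) <;>
    subst hd <;> norm_num <;>
    simp only [G2] at hg <;> split_ifs at hg <;> (try (exfalso; omega)) <;>
    simp only [G2] at hg' <;> split_ifs at hg' <;> omega

set_option maxHeartbeats 4000000 in
lemma step3 (b p q r : ℤ) (hb : 3 ≤ b) (hv : Vld (3 + b - 1) (3 + b - 2) (3 + b - 3) p q r) :
    G3 b (s1 (3 + b - 1) (3 + b - 2) (3 + b - 3) p q r) (s2 (3 + b - 2) (3 + b - 3) p q r) (s3 (3 + b - 3) q r) - G3 b p q r = (3 + b) * dd p q r - 3 * b := by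
  generalize hp : s1 (3 + b - 1) (3 + b - 2) (3 + b - 3) p q r = p'
  generalize hq : s2 (3 + b - 2) (3 + b - 3) p q r = q'
  generalize hr : s3 (3 + b - 3) q r = r'
  generalize hd : dd p q r = d
  generalize hg : G3 b p q r = g
  generalize hg' : G3 b p' q' r' = g'
  simp only [Vld] at hv
  by_cases n1 : N1 (3 + b - 1) p <;> by_cases n2 : N2 (3 + b - 2) p q <;>
    by_cases n3 : N3 (3 + b - 3) q r <;>
    simp only [s1, s2, s3, n1, n2, n3, if_true, if_false] at hp hq hr <;>
    simp only [N1, N2, N3] at n1 n2 n3 <;> (try (exfalso; omega)) <;>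
    by_cases m1 : M1 p q <;> by_cases m2 : M2 q r <;> by_cases m3 : M3 r <;>
    simp only [dd, m1, m2, m3, if_true, if_false] at hd <;>
    simp only [M1, M2, M3] at m1 m2 m3 <;> (try (exfalso; omega)) <;>
    subst hd <;> norm_num <;>
    simp only [G3] at hg <;> split_ifs at hg <;> (try (exfalso; omega)) <;>
    simp only [G3] at hg' <;> split_ifs at hg' <;> omega

lemma key_int (a b : ℤ) (ha : 1 ≤ a) (ha3 : a ≤ 3) (hab : a ≤ b)
    (I : Finset (ℤ × ℤ)) (hI : IsIdeal (trap a b) I)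
    (n : ℕ) (hfix : (row (trap a b))^[n] I = I) :
    (a + b) * ∑ k ∈ Finset.range n, (ddeg ((row (trap a b))^[k] I) : ℤ) = a * b * n := by
  have hP := trap_rws a b ha ha3 hab
  have h3 : a = 1 ∨ a = 2 ∨ a = 3 := by omega
  rcases h3 with rfl | rfl | rfl
  · rw [if_neg (by norm_num), if_neg (by norm_num)] at hP
    exact telescope hP (by simp only [Vld]; omega) (fun p _ _ => G1 b p)
      (fun p q r hv => step1 b p q r hab hv) I hI n hfix
  · rw [if_pos (by norm_num), if_neg (by norm_num)] at hP
    exact telescope hP (by simp only [Vld]; omega) (fun p q _ => G2 b p q)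
      (fun p q r hv => step2 b p q r hab hv) I hI n hfix
  · rw [if_pos (by norm_num), if_pos (by norm_num)] at hP
    exact telescope hP (by simp only [Vld]; omega) (G3 b)
      (fun p q r hv => step3 b p q r hab hv) I hI n hfix

/-- Down-degree is homomesic under rowmotion on `J(𝓣(a,b))` for `a ≤ 3`. -/
theorem ddeg_homomesic (a b : ℤ) (ha : 1 ≤ a) (ha3 : a ≤ 3) (hab : a ≤ b)
    (I : Finset (ℤ × ℤ)) (hI : IsIdeal (trap a b) I)
    (n : ℕ) (hn : 1 ≤ n) (hfix : (row (trap a b))^[n] I = I) :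
    (1 / (n : ℝ)) * ∑ k ∈ Finset.range n, (ddeg ((row (trap a b))^[k] I) : ℝ)
      = (a : ℝ) * b / (a + b) := by
  have h := key_int a b ha ha3 hab I hI n hfix
  have h' : ((a : ℝ) + b) * ∑ k ∈ Finset.range n, (ddeg ((row (trap a b))^[k] I) : ℝ)
      = a * b * n := by exact_mod_cast h
  have hn0 : (n : ℝ) ≠ 0 := by
    have : n ≠ 0 := by omega
    exact_mod_cast this
  have hab0 : (a : ℝ) + b ≠ 0 := by
    have : a + b ≠ 0 := by omega
    exact_mod_cast this
  rw [eq_div_iff hab0, mul_comm, mul_left_comm, h']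
  field_simp

end Stmt11
end
end

section
/- Let P be a finite poset and A ⊆ P an antichain. For every order ideal I of P, 𝒯_A⁺(I) = 1 if and only if 𝒯_A⁻(row(I)) = 1. Consequently, for every order ideal I and every n ≥ 1 with row^n(I) = I, Σ_{k=0}^{n−1} 𝒯_A(row^k(I)) = 0; i.e. the uniform distribution on any rowmotion orbit is toggle-on-antichains-symmetric. -/
/-!
STATEMENT 12: For a finite poset `P` and an antichain `A ⊆ P`:
`𝒯_A⁺(I) = 1 ↔ 𝒯_A⁻(row I) = 1` for every order ideal `I`; consequently the
sum of `𝒯_A` along any rowmotion orbit vanishes, i.e. the uniform distribution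
on a rowmotion orbit is toggle-on-antichains-symmetric.
-/

open scoped Classical

noncomputable section

namespace Stmt12

variable {P : Type*}

/-- `I` is an order ideal of the finite poset `P`: a downward-closed subset. -/
def IsIdeal [PartialOrder P] (I : Finset P) : Prop :=
  ∀ x ∈ I, ∀ y, y ≤ x → y ∈ I

/-- Rowmotion: `row I` is the order ideal generated by the minimal elements of
the complement of `I`. -/
def row [Fintype P] [PartialOrder P] (I : Finset P) : Finset P :=
  Finset.univ.filter (fun x => ∃ m, m ∉ I ∧ (∀ y, y ∉ I → y ≤ m → y = m) ∧ x ≤ m)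

/-- `𝒯_A⁺(I) = 1` if `A ∩ I = ∅` and `I ∪ A` is an order ideal, else `0`. -/
def togPlus [PartialOrder P] [DecidableEq P] (A I : Finset P) : ℝ :=
  if (∀ x ∈ A, x ∉ I) ∧ IsIdeal (I ∪ A) then 1 else 0

/-- `𝒯_A⁻(I) = 1` if `A ⊆ I` and `I \ A` is an order ideal, else `0`. -/
def togMinus [PartialOrder P] [DecidableEq P] (A I : Finset P) : ℝ :=
  if A ⊆ I ∧ IsIdeal (I \ A) then 1 else 0

/-- `𝒯_A = 𝒯_A⁺ − 𝒯_A⁻`. -/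
def tog [PartialOrder P] [DecidableEq P] (A I : Finset P) : ℝ :=
  togPlus A I - togMinus A I

theorem key_iff [Fintype P] [PartialOrder P] [DecidableEq P]
    (A : Finset P) (hA : IsAntichain (· ≤ ·) (A : Set P)) (I : Finset P) (hI : IsIdeal I) :
    ((∀ x ∈ A, x ∉ I) ∧ IsIdeal (I ∪ A)) ↔ (A ⊆ row I ∧ IsIdeal (row I \ A)) := by
  have anti : ∀ a ∈ A, ∀ b ∈ A, a ≤ b → a = b := fun a ha b hb h =>
    hA.eq (Finset.mem_coe.2 ha) (Finset.mem_coe.2 hb) h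
  have mr : ∀ x, x ∈ row I ↔ ∃ m, m ∉ I ∧ (∀ y, y ∉ I → y ≤ m → y = m) ∧ x ≤ m := by
    intro x; simp [row]
  constructor
  · rintro ⟨h1, h2⟩
    refine ⟨fun a ha => (mr a).2 ⟨a, h1 a ha, fun y hy hya => ?_, le_rfl⟩, ?_⟩
    · rcases Finset.mem_union.1 (h2 a (Finset.mem_union_right _ ha) y hya) with h | h
      · exact absurd h hy
      · exact anti y h a ha hya
    · intro x hx y hyx
      obtain ⟨hx1, hx2⟩ := Finset.mem_sdiff.1 hx
      obtain ⟨m, hm, hmin, hxm⟩ := (mr x).1 hx1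
      refine Finset.mem_sdiff.2 ⟨(mr y).2 ⟨m, hm, hmin, hyx.trans hxm⟩, fun hyA => hx2 ?_⟩
      have e := hmin y (h1 y hyA) (hyx.trans hxm)
      have : x = y := le_antisymm (e ▸ hxm) hyx
      exact this ▸ hyA
  · rintro ⟨h1, h2⟩
    have hmin : ∀ a ∈ A, a ∉ I ∧ ∀ y, y ∉ I → y ≤ a → y = a := by
      intro a ha
      obtain ⟨m, hm, hmin, ham⟩ := (mr a).1 (h1 ha)
      have hmA : m ∈ A := by
        by_contra hmA
        exact (Finset.mem_sdiff.1 (h2 m (Finset.mem_sdiff.2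
          ⟨(mr m).2 ⟨m, hm, hmin, le_rfl⟩, hmA⟩) a ham)).2 ha
      have e := anti a ha m hmA ham
      subst e
      exact ⟨hm, hmin⟩
    refine ⟨fun a ha => (hmin a ha).1, fun x hx y hyx => ?_⟩
    rcases Finset.mem_union.1 hx with h | h
    · exact Finset.mem_union_left _ (hI x h y hyx)
    · by_cases hy : y ∈ I
      · exact Finset.mem_union_left _ hy
      · rw [(hmin x h).2 y hy hyx]; exact hx

theorem key_eq [Fintype P] [PartialOrder P] [DecidableEq P]
    (A : Finset P) (hA : IsAntichain (· ≤ ·) (A : Set P)) (I : Finset P) (hI : IsIdeal I) :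
    togPlus A I = togMinus A (row I) := by
  unfold togPlus togMinus
  simp only [key_iff A hA I hI]

theorem row_isIdeal [Fintype P] [PartialOrder P] (I : Finset P) : IsIdeal (row I) := by
  intro x hx y hyx
  simp only [row, Finset.mem_filter, Finset.mem_univ, true_and] at hx ⊢
  obtain ⟨m, hm, hmin, hxm⟩ := hx
  exact ⟨m, hm, hmin, hyx.trans hxm⟩

/-- An antichain can be toggled into `I` iff it can be toggled out of `row I`;
hence `𝒯_A` sums to zero along every rowmotion orbit. -/
theorem togPlus_iff_togMinus_row_and_orbit_sum_zero
    [Fintype P] [PartialOrder P] [DecidableEq P]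
    (A : Finset P) (hA : IsAntichain (· ≤ ·) (A : Set P)) :
    (∀ I : Finset P, IsIdeal I → (togPlus A I = 1 ↔ togMinus A (row I) = 1)) ∧
    (∀ I : Finset P, IsIdeal I → ∀ n : ℕ, 1 ≤ n → row^[n] I = I →
      ∑ k ∈ Finset.range n, tog A (row^[k] I) = 0) := by
  refine ⟨fun I hI => by rw [key_eq A hA I hI], fun I hI n _ hn => ?_⟩
  have hid : ∀ k, IsIdeal (row^[k] I) := by
    intro k
    cases k with
    | zero => exact hI
    | succ k => rw [Function.iterate_succ_apply']; exact row_isIdeal _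
  have e : ∀ k ∈ Finset.range n, tog A (row^[k] I)
      = togMinus A (row^[k+1] I) - togMinus A (row^[k] I) := by
    intro k _
    rw [tog, key_eq A hA _ (hid k), Function.iterate_succ_apply']
  rw [Finset.sum_congr rfl e, Finset.sum_range_sub (fun k => togMinus A (row^[k] I)), hn]
  simp

end Stmt12
end
end

section
/- Let 1 ≤ a ≤ b. For any toggle-symmetric probability distribution μ on J(𝓣(a,b)): Σ_{i=1}^{a} (a−i)·E[μ; 𝒯⁻_{(i,i)}] = Σ E[μ; 𝒯⁻_{(i,j)}], where the right-hand sum ranges over all elements (i,j) of 𝓣(a,b) with i < j ≤ a (the strictly-above-diagonal elements in the first a columns). -/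
/-!
STATEMENT 14: For any toggle-symmetric distribution μ on J(𝓣(a,b)):
Σ_{i=1}^{a} (a−i)·E[μ; 𝒯⁻_{(i,i)}] equals the sum of E[μ; 𝒯⁻_{(i,j)}] over the
elements (i,j) of 𝓣(a,b) with i < j ≤ a.
-/

open scoped Classical

noncomputable section

namespace Stmt14

/-- The trapezoid poset `𝓣(a,b) = {(i,j) : 1 ≤ i ≤ a, i ≤ j ≤ a+b-i}`,
as a finite subset of `ℤ × ℤ` with the componentwise order. -/
def trap (a b : ℤ) : Finset (ℤ × ℤ) :=
  (Finset.Icc (1, 1) (a, a + b - 1)).filter (fun p => p.1 ≤ p.2 ∧ p.2 ≤ a + b - p.1)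

/-- `I` is an order ideal of the poset with ground set `P ⊆ ℤ × ℤ`. -/
def IsIdeal (P I : Finset (ℤ × ℤ)) : Prop :=
  I ⊆ P ∧ ∀ x ∈ I, ∀ y ∈ P, y ≤ x → y ∈ I

/-- `J(P)`: the set of order ideals of `P`. -/
def ideals (P : Finset (ℤ × ℤ)) : Finset (Finset (ℤ × ℤ)) :=
  P.powerset.filter (fun I => IsIdeal P I)

/-- The down-degree of `I`: the number of maximal elements of `I`. -/
def ddeg (I : Finset (ℤ × ℤ)) : ℕ :=
  (I.filter (fun x => ∀ y ∈ I, x ≤ y → x = y)).card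

/-- `𝒯_A⁺(I) = 1` if `A ∩ I = ∅` and `I ∪ A` is an order ideal, else `0`. -/
def togPlus (P A I : Finset (ℤ × ℤ)) : ℝ :=
  if (∀ x ∈ A, x ∉ I) ∧ IsIdeal P (I ∪ A) then 1 else 0

/-- `𝒯_A⁻(I) = 1` if `A ⊆ I` and `I \ A` is an order ideal, else `0`. -/
def togMinus (P A I : Finset (ℤ × ℤ)) : ℝ :=
  if A ⊆ I ∧ IsIdeal P (I \ A) then 1 else 0

/-- `𝒯_A = 𝒯_A⁺ − 𝒯_A⁻`. -/
def tog (P A I : Finset (ℤ × ℤ)) : ℝ := togPlus P A I - togMinus P A I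

/-- Expectation of the statistic `f` with respect to `μ` on `J(P)`. -/
def expect (P : Finset (ℤ × ℤ)) (μ : Finset (ℤ × ℤ) → ℝ) (f : Finset (ℤ × ℤ) → ℝ) : ℝ :=
  ∑ I ∈ ideals P, μ I * f I

/-- `μ` is a probability distribution on `J(P)`. -/
def IsDistribution (P : Finset (ℤ × ℤ)) (μ : Finset (ℤ × ℤ) → ℝ) : Prop :=
  (∀ I ∈ ideals P, 0 ≤ μ I) ∧ ∑ I ∈ ideals P, μ I = 1

/-- `μ` is toggle-on-antichains-symmetric: `E[μ; 𝒯_A] = 0` for every antichain `A ⊆ P`. -/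
def ToggleAntichainSymmetric (P : Finset (ℤ × ℤ)) (μ : Finset (ℤ × ℤ) → ℝ) : Prop :=
  ∀ A : Finset (ℤ × ℤ), A ⊆ P → IsAntichain (· ≤ ·) (A : Set (ℤ × ℤ)) →
    expect P μ (tog P A) = 0

/-- `μ` is toggle-symmetric: `E[μ; 𝒯_p⁺ − 𝒯_p⁻] = 0` for every `p ∈ P`. -/
def ToggleSymmetric (P : Finset (ℤ × ℤ)) (μ : Finset (ℤ × ℤ) → ℝ) : Prop :=
  ∀ p ∈ P, expect P μ (tog P {p}) = 0


theorem sum_Ico_last (f : ℤ → ℝ) (n : ℤ) (hn : 1 ≤ n) :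
    ∑ i ∈ Finset.Ico 1 (n + 1), f i = ∑ i ∈ Finset.Ico 1 n, f i + f n := by
  have : Finset.Ico 1 (n + 1) = insert n (Finset.Ico 1 n) := by
    ext x; simp only [Finset.mem_Ico, Finset.mem_insert]; omega
  rw [this, Finset.sum_insert (by simp), add_comm]

theorem sum_tele (f : ℤ → ℝ) (n : ℤ) (hn : 1 ≤ n) :
    ∑ i ∈ Finset.Ico 1 n, (f i - f (i + 1)) = f 1 - f n := by
  induction n, hn using Int.le_induction with
  | base => simp
  | succ n hn ih => rw [sum_Ico_last _ n hn, ih]; ring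

theorem sum_tri (f : ℤ → ℝ) (n : ℤ) (hn : 1 ≤ n) :
    ∑ m ∈ Finset.Ico 1 n, ∑ i ∈ Finset.Ico 1 m, f i
      = ∑ i ∈ Finset.Ico 1 n, ((n - 1 - i : ℤ) : ℝ) * f i := by
  induction n, hn using Int.le_induction with
  | base => simp
  | succ n hn ih =>
    rw [sum_Ico_last _ n hn, sum_Ico_last _ n hn, ih, ← Finset.sum_add_distrib]
    have : ((n + 1 - 1 - n : ℤ) : ℝ) = 0 := by push_cast; ring
    rw [this, zero_mul, add_zero]
    apply Finset.sum_congr rfl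
    intro i _
    push_cast; ring

theorem mem_trap (a b i j : ℤ) :
    (i, j) ∈ trap a b ↔ 1 ≤ i ∧ i ≤ a ∧ i ≤ j ∧ j ≤ a + b - i := by
  simp only [trap, Finset.mem_filter, Finset.mem_Icc, Prod.mk_le_mk]
  omega

theorem plus_iff (a b i m : ℤ) (hab : a ≤ b) (hi : 1 ≤ i) (him : i < m) (hm : m ≤ a)
    (I : Finset (ℤ × ℤ)) (hI : IsIdeal (trap a b) I) :
    ((∀ x ∈ ({(i, m)} : Finset (ℤ × ℤ)), x ∉ I) ∧ IsIdeal (trap a b) (I ∪ {(i, m)})) ↔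
      (i, m) ∉ I ∧ (i, m - 1) ∈ I ∧ (i = 1 ∨ (i - 1, m) ∈ I) := by
  obtain ⟨hs, hd⟩ := hI
  have hd' : ∀ x y, (x, y) ∈ I → ∀ u v, 1 ≤ u → u ≤ v → u ≤ x → v ≤ y → (u, v) ∈ I := by
    intro x y h u v h1 h2 h3 h4
    have h5 := (mem_trap a b x y).1 (hs h)
    exact hd _ h _ ((mem_trap a b u v).2 (by omega)) (Prod.mk_le_mk.2 ⟨h3, h4⟩)
  constructor
  · rintro ⟨h1, h2, h3⟩
    have h1 := h1 _ (Finset.mem_singleton_self _)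
    refine ⟨h1, ?_, ?_⟩
    · have := h3 (i, m) (by simp) (i, m - 1) ((mem_trap _ _ _ _).2 (by omega))
        (Prod.mk_le_mk.2 (by omega))
      simpa using this
    · by_cases h : i = 1
      · exact Or.inl h
      · have := h3 (i, m) (by simp) (i - 1, m) ((mem_trap _ _ _ _).2 (by omega))
          (Prod.mk_le_mk.2 (by omega))
        right
        simpa using this
  · rintro ⟨h1, h2, h3⟩
    refine ⟨by simpa using h1, ?_, ?_⟩
    · intro x hx
      rcases Finset.mem_union.1 hx with h | h
      · exact hs h
      · rw [Finset.mem_singleton.1 h]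
        exact (mem_trap _ _ _ _).2 (by omega)
    · rintro x hx ⟨u, v⟩ hy hyx
      rcases Finset.mem_union.1 hx with h | h
      · exact Finset.mem_union_left _ (hd _ h _ hy hyx)
      · rw [Finset.mem_singleton.1 h, Prod.mk_le_mk] at hyx
        rw [mem_trap] at hy
        by_cases hv : v ≤ m - 1
        · exact Finset.mem_union_left _ (hd' _ _ h2 u v hy.1 (by omega) hyx.1 hv)
        · obtain rfl : v = m := by omega
          by_cases hu : u = i
          · subst hu; simp
          · rcases h3 with h3 | h3
            · omega
            · exact Finset.mem_union_left _ (hd' _ _ h3 u v hy.1 (by omega) (by omega) le_rfl)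

theorem minus_iff (a b i m : ℤ) (hab : a ≤ b) (hi : 1 ≤ i) (him : i < m) (hm : m ≤ a)
    (I : Finset (ℤ × ℤ)) (hI : IsIdeal (trap a b) I) :
    (({(i, m - 1)} : Finset (ℤ × ℤ)) ⊆ I ∧ IsIdeal (trap a b) (I \ {(i, m - 1)})) ↔
      (i, m - 1) ∈ I ∧ (i, m) ∉ I ∧ (i + 1, m - 1) ∉ I := by
  obtain ⟨hs, hd⟩ := hI
  have hd' : ∀ x y, (x, y) ∈ I → ∀ u v, 1 ≤ u → u ≤ v → u ≤ x → v ≤ y → (u, v) ∈ I := by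
    intro x y h u v h1 h2 h3 h4
    have h5 := (mem_trap a b x y).1 (hs h)
    exact hd _ h _ ((mem_trap a b u v).2 (by omega)) (Prod.mk_le_mk.2 ⟨h3, h4⟩)
  have hP : (i, m - 1) ∈ trap a b := (mem_trap _ _ _ _).2 (by omega)
  constructor
  · rintro ⟨h1, h2, h3⟩
    refine ⟨by simpa using h1, ?_, ?_⟩
    · intro h
      have := h3 (i, m) (by simp [h]; omega) _ hP (Prod.mk_le_mk.2 (by omega))
      simp at this
    · intro h
      have := h3 (i + 1, m - 1) (by simp [h]) _ hP (Prod.mk_le_mk.2 (by omega))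
      simp at this
  · rintro ⟨h1, h2, h3⟩
    refine ⟨by simpa using h1, Finset.sdiff_subset.trans hs, ?_⟩
    rintro ⟨x, y⟩ hx ⟨u, v⟩ hy hyx
    rw [Finset.mem_sdiff, Finset.mem_singleton] at hx ⊢
    refine ⟨hd _ hx.1 _ hy hyx, ?_⟩
    intro he
    rw [Prod.mk.injEq] at he
    obtain ⟨rfl, rfl⟩ := he
    rw [Prod.mk_le_mk] at hyx
    have hxP := (mem_trap _ _ _ _).1 (hs hx.1)
    by_cases hy1 : m ≤ y
    · exact h2 (hd' _ _ hx.1 u m hi him.le hyx.1 hy1)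
    · have hy2 : y = m - 1 := by omega
      have hx2 : x ≠ u := by
        rintro rfl
        exact hx.2 (by rw [hy2])
      exact h3 (hd' _ _ hx.1 _ _ (by omega) (by omega) (by omega) (by omega))

theorem pointwise (a b m : ℤ) (hab : a ≤ b) (hm1 : 1 ≤ m) (hm : m ≤ a)
    (I : Finset (ℤ × ℤ)) (hI : IsIdeal (trap a b) I) :
    ∑ i ∈ Finset.Ico 1 m, togPlus (trap a b) {(i, m)} I
      = ∑ i ∈ Finset.Ico 1 m, togMinus (trap a b) {(i, m - 1)} I := by
  rw [← sub_eq_zero, ← Finset.sum_sub_distrib]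
  have hd' : ∀ x y, (x, y) ∈ I → ∀ u v, 1 ≤ u → u ≤ v → u ≤ x → v ≤ y → (u, v) ∈ I := by
    intro x y h u v h1 h2 h3 h4
    have h5 := (mem_trap a b x y).1 (hI.1 h)
    exact hI.2 _ h _ ((mem_trap a b u v).2 (by omega)) (Prod.mk_le_mk.2 ⟨h3, h4⟩)
  let G : ℤ → ℝ := fun i => if i ≠ 1 ∧ (i, m - 1) ∈ I ∧ (i - 1, m) ∉ I then -1 else 0
  have h1 : G 1 = 0 := by simp [G]
  have h2 : G m = 0 := by
    have : (m, m - 1) ∉ I := fun h => by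
      have := (mem_trap _ _ _ _).1 (hI.1 h)
      omega
    simp [G, this]
  have key : ∀ i ∈ Finset.Ico 1 m, togPlus (trap a b) {(i, m)} I
      - togMinus (trap a b) {(i, m - 1)} I = G i - G (i + 1) := by
    intro i hi
    rw [Finset.mem_Ico] at hi
    unfold togPlus togMinus
    rw [if_congr (plus_iff a b i m hab hi.1 hi.2 hm I hI) rfl rfl,
      if_congr (minus_iff a b i m hab hi.1 hi.2 hm I hI) rfl rfl]
    simp only [G]
    have e1 : i + 1 ≠ 1 := by omega
    have e2 : i + 1 - 1 = i := by ring
    rw [e2]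
    have c1 : (i, m) ∈ I → (i, m - 1) ∈ I := fun h =>
      hd' _ _ h _ _ hi.1 (by omega) le_rfl (by omega)
    have c2 : (i + 1, m - 1) ∈ I → (i, m - 1) ∈ I := fun h => by
      have := (mem_trap _ _ _ _).1 (hI.1 h)
      exact hd' _ _ h _ _ hi.1 (by omega) (by omega) le_rfl
    have c3 : (i, m) ∈ I → i ≠ 1 → (i - 1, m) ∈ I := fun h h' =>
      hd' _ _ h _ _ (by omega) (by omega) (by omega) le_rfl
    by_cases p1 : (i, m) ∈ I <;> by_cases p2 : (i, m - 1) ∈ I <;>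
      by_cases p3 : (i + 1, m - 1) ∈ I <;> by_cases p4 : (i - 1, m) ∈ I <;>
      by_cases p5 : i = 1 <;> simp_all
  rw [Finset.sum_congr rfl key, sum_tele G m hm1, h1, h2, sub_zero]

theorem expect_sum (P : Finset (ℤ × ℤ)) (μ : Finset (ℤ × ℤ) → ℝ) (s : Finset ℤ)
    (f : ℤ → Finset (ℤ × ℤ) → ℝ) :
    ∑ i ∈ s, expect P μ (f i) = ∑ I ∈ ideals P, μ I * ∑ i ∈ s, f i I := by
  unfold expect
  rw [Finset.sum_comm]
  simp only [Finset.mul_sum]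

theorem diagonal_toggle_sum_eq (a b : ℤ) (ha : 1 ≤ a) (hab : a ≤ b)
    (μ : Finset (ℤ × ℤ) → ℝ) (hμ : IsDistribution (trap a b) μ)
    (hsym : ToggleSymmetric (trap a b) μ) :
    (∑ i ∈ Finset.Icc (1 : ℤ) a,
        ((a - i : ℤ) : ℝ) * expect (trap a b) μ (togMinus (trap a b) {(i, i)}))
      = ∑ p ∈ (trap a b).filter (fun p => p.1 < p.2 ∧ p.2 ≤ a),
          expect (trap a b) μ (togMinus (trap a b) {p}) := by
  have hpm : ∀ p ∈ trap a b, expect (trap a b) μ (togPlus (trap a b) {p})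
      = expect (trap a b) μ (togMinus (trap a b) {p}) := by
    intro p hp
    have h := hsym p hp
    unfold expect tog at h
    simp only [mul_sub, Finset.sum_sub_distrib] at h
    exact sub_eq_zero.1 h
  set e : ℤ × ℤ → ℝ := fun p => expect (trap a b) μ (togMinus (trap a b) {p}) with he
  have step : ∀ m, 1 ≤ m → m ≤ a →
      ∑ i ∈ Finset.Ico 1 m, e (i, m) = ∑ i ∈ Finset.Ico 1 m, e (i, m - 1) := by
    intro m h1 h2
    calc ∑ i ∈ Finset.Ico 1 m, e (i, m)
        = ∑ i ∈ Finset.Ico 1 m, expect (trap a b) μ (togPlus (trap a b) {(i, m)}) := by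
          apply Finset.sum_congr rfl
          intro i hi
          rw [Finset.mem_Ico] at hi
          exact (hpm _ ((mem_trap _ _ _ _).2 (by omega))).symm
      _ = ∑ i ∈ Finset.Ico 1 m, e (i, m - 1) := by
          simp only [he]
          rw [expect_sum, expect_sum]
          apply Finset.sum_congr rfl
          intro I hI
          rw [pointwise a b m hab h1 h2 I (Finset.mem_filter.1 hI).2]
  have hB : ∀ m, 1 ≤ m → m ≤ a →
      ∑ i ∈ Finset.Ico 1 m, e (i, m) = ∑ i ∈ Finset.Ico 1 m, e (i, i) := by
    intro m h1
    induction m, h1 using Int.le_induction with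
    | base => simp
    | succ n hn ih =>
      intro h2
      rw [step (n + 1) (by omega) h2, sum_Ico_last _ n hn, sum_Ico_last _ n hn,
        ← ih (by omega), add_sub_cancel_right]
  have hR : ∑ p ∈ (trap a b).filter (fun p => p.1 < p.2 ∧ p.2 ≤ a), e p
      = ∑ m ∈ Finset.Ico 1 (a + 1), ∑ i ∈ Finset.Ico 1 m, e (i, m) := by
    apply Finset.sum_finset_product_right
    rintro ⟨i, j⟩
    simp only [Finset.mem_filter, mem_trap, Finset.mem_Ico]
    omega
  have hIcc : Finset.Icc (1 : ℤ) a = Finset.Ico 1 (a + 1) := by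
    ext x; simp only [Finset.mem_Icc, Finset.mem_Ico]; omega
  rw [hR, hIcc]
  rw [Finset.sum_congr rfl (fun m hm => hB m (Finset.mem_Ico.1 hm).1
    (by have := (Finset.mem_Ico.1 hm).2; omega)), sum_tri (fun i => e (i, i)) (a + 1) (by omega)]
  apply Finset.sum_congr rfl
  intro i _
  rw [add_sub_cancel_right]

end Stmt14
end
end

section
/- Let 1 ≤ a ≤ b. For any toggle-on-antichains-symmetric probability distribution μ on J(𝓣(a,b)): Σ_{i=1}^{a−1} Σ_{j=i+1}^{a} E[μ; 𝒯⁻_{{(i,j+1),(j,j)}}] = Σ_{i=1}^{a−1} E[μ; 𝒯⁻_{(i,i+1)}]. -/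
/-!
STATEMENT 17: For any toggle-on-antichains-symmetric distribution μ on
J(𝓣(a,b)): Σ_{i=1}^{a−1} Σ_{j=i+1}^{a} E[μ; 𝒯⁻_{{(i,j+1),(j,j)}}]
= Σ_{i=1}^{a−1} E[μ; 𝒯⁻_{(i,i+1)}].
-/

open scoped Classical

noncomputable section

namespace Stmt17

/-- The trapezoid poset `𝓣(a,b) = {(i,j) : 1 ≤ i ≤ a, i ≤ j ≤ a+b-i}`,
as a finite subset of `ℤ × ℤ` with the componentwise order. -/
def trap (a b : ℤ) : Finset (ℤ × ℤ) :=
  (Finset.Icc (1, 1) (a, a + b - 1)).filter (fun p => p.1 ≤ p.2 ∧ p.2 ≤ a + b - p.1)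

/-- `I` is an order ideal of the poset with ground set `P ⊆ ℤ × ℤ`. -/
def IsIdeal (P I : Finset (ℤ × ℤ)) : Prop :=
  I ⊆ P ∧ ∀ x ∈ I, ∀ y ∈ P, y ≤ x → y ∈ I

/-- `J(P)`: the set of order ideals of `P`. -/
def ideals (P : Finset (ℤ × ℤ)) : Finset (Finset (ℤ × ℤ)) :=
  P.powerset.filter (fun I => IsIdeal P I)

/-- The down-degree of `I`: the number of maximal elements of `I`. -/
def ddeg (I : Finset (ℤ × ℤ)) : ℕ :=
  (I.filter (fun x => ∀ y ∈ I, x ≤ y → x = y)).card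

/-- `𝒯_A⁺(I) = 1` if `A ∩ I = ∅` and `I ∪ A` is an order ideal, else `0`. -/
def togPlus (P A I : Finset (ℤ × ℤ)) : ℝ :=
  if (∀ x ∈ A, x ∉ I) ∧ IsIdeal P (I ∪ A) then 1 else 0

/-- `𝒯_A⁻(I) = 1` if `A ⊆ I` and `I \ A` is an order ideal, else `0`. -/
def togMinus (P A I : Finset (ℤ × ℤ)) : ℝ :=
  if A ⊆ I ∧ IsIdeal P (I \ A) then 1 else 0

/-- `𝒯_A = 𝒯_A⁺ − 𝒯_A⁻`. -/
def tog (P A I : Finset (ℤ × ℤ)) : ℝ := togPlus P A I - togMinus P A I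

/-- Expectation of the statistic `f` with respect to `μ` on `J(P)`. -/
def expect (P : Finset (ℤ × ℤ)) (μ : Finset (ℤ × ℤ) → ℝ) (f : Finset (ℤ × ℤ) → ℝ) : ℝ :=
  ∑ I ∈ ideals P, μ I * f I

/-- `μ` is a probability distribution on `J(P)`. -/
def IsDistribution (P : Finset (ℤ × ℤ)) (μ : Finset (ℤ × ℤ) → ℝ) : Prop :=
  (∀ I ∈ ideals P, 0 ≤ μ I) ∧ ∑ I ∈ ideals P, μ I = 1

/-- `μ` is toggle-on-antichains-symmetric: `E[μ; 𝒯_A] = 0` for every antichain `A ⊆ P`. -/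
def ToggleAntichainSymmetric (P : Finset (ℤ × ℤ)) (μ : Finset (ℤ × ℤ) → ℝ) : Prop :=
  ∀ A : Finset (ℤ × ℤ), A ⊆ P → IsAntichain (· ≤ ·) (A : Set (ℤ × ℤ)) →
    expect P μ (tog P A) = 0

/-- `μ` is toggle-symmetric: `E[μ; 𝒯_p⁺ − 𝒯_p⁻] = 0` for every `p ∈ P`. -/
def ToggleSymmetric (P : Finset (ℤ × ℤ)) (μ : Finset (ℤ × ℤ) → ℝ) : Prop :=
  ∀ p ∈ P, expect P μ (tog P {p}) = 0


theorem mem_trap (a b x y : ℤ) :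
    (x, y) ∈ trap a b ↔ 1 ≤ x ∧ x ≤ a ∧ x ≤ y ∧ y ≤ a + b - x := by
  simp only [trap, Finset.mem_filter, Finset.mem_Icc, Prod.mk_le_mk]
  constructor
  · rintro ⟨⟨⟨h1, h2⟩, h3, h4⟩, h5, h6⟩
    exact ⟨h1, h3, h5, h6⟩
  · rintro ⟨h1, h2, h3, h4⟩
    exact ⟨⟨⟨h1, by omega⟩, h2, by omega⟩, h3, h4⟩

theorem minus_iff (a b : ℤ) (hab : a ≤ b) (I : Finset (ℤ × ℤ))
    (hI : IsIdeal (trap a b) I) (j : ℤ) (hj : 2 ≤ j) (hja : j ≤ a) :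
    ({(j - 1, j)} ⊆ I ∧ IsIdeal (trap a b) (I \ {(j - 1, j)})) ↔
      ((j - 1, j) ∈ I ∧ (j, j) ∉ I ∧ (j - 1, j + 1) ∉ I) := by
  have hP : (j - 1, j) ∈ trap a b := (mem_trap ..).2 (by omega)
  rw [Finset.singleton_subset_iff]
  constructor
  · rintro ⟨h1, h2⟩
    refine ⟨h1, fun h => ?_, fun h => ?_⟩
    · have := h2.2 (j, j) (by simp [h]; omega) _ hP (by simp [Prod.mk_le_mk])
      simp at this
    · have := h2.2 (j - 1, j + 1) (by simp [h]) _ hP (by simp [Prod.mk_le_mk])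
      simp at this
  · rintro ⟨h1, h2, h3⟩
    refine ⟨h1, fun x hx => hI.1 (Finset.mem_sdiff.1 hx).1, ?_⟩
    rintro ⟨x, y⟩ hx ⟨z, w⟩ hz hle
    rw [Finset.mem_sdiff, Finset.mem_singleton] at hx ⊢
    refine ⟨hI.2 _ hx.1 _ hz hle, fun he => ?_⟩
    rw [Prod.mk.injEq] at he
    rw [Prod.mk_le_mk] at hle
    have hxP := (mem_trap ..).1 (hI.1 hx.1)
    have hne := hx.2
    rw [Prod.mk.injEq] at hne
    by_cases hxj : j ≤ x
    · exact h2 (hI.2 _ hx.1 _ ((mem_trap ..).2 (by omega)) (by rw [Prod.mk_le_mk]; omega))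
    · exact h3 (hI.2 _ hx.1 _ ((mem_trap ..).2 (by omega)) (by rw [Prod.mk_le_mk]; omega))

theorem plus_iff (a b : ℤ) (hab : a ≤ b) (I : Finset (ℤ × ℤ))
    (hI : IsIdeal (trap a b) I) (i j : ℤ) (hi : 1 ≤ i) (hij : i ≤ j - 1) (hja : j ≤ a) :
    ((∀ x ∈ ({(i, j + 1), (j, j)} : Finset (ℤ × ℤ)), x ∉ I) ∧
        IsIdeal (trap a b) (I ∪ {(i, j + 1), (j, j)})) ↔
      ((j - 1, j) ∈ I ∧ (j, j) ∉ I ∧ (i, j + 1) ∉ I ∧ (i = 1 ∨ (i - 1, j + 1) ∈ I)) := by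
  have hP : (j - 1, j) ∈ trap a b := (mem_trap ..).2 (by omega)
  constructor
  · rintro ⟨h1, h2⟩
    refine ⟨?_, h1 _ (by simp), h1 _ (by simp), ?_⟩
    · have := h2.2 (j, j) (by simp) _ hP (by simp [Prod.mk_le_mk])
      simp only [Finset.mem_union, Finset.mem_insert, Finset.mem_singleton, Prod.mk.injEq] at this
      rcases this with h | h | h
      · exact h
      · omega
      · omega
    · by_cases h : i = 1
      · exact Or.inl h
      · right
        have := h2.2 (i, j + 1) (by simp) (i - 1, j + 1) ((mem_trap ..).2 (by omega))
          (by simp [Prod.mk_le_mk])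
        simp only [Finset.mem_union, Finset.mem_insert, Finset.mem_singleton,
          Prod.mk.injEq] at this
        rcases this with h | h | h
        · exact h
        · omega
        · omega
  · rintro ⟨h1, h2, h3, h4⟩
    refine ⟨?_, ?_, ?_⟩
    · intro x hx
      simp only [Finset.mem_insert, Finset.mem_singleton] at hx
      rcases hx with rfl | rfl
      · exact h3
      · exact h2
    · intro x hx
      simp only [Finset.mem_union, Finset.mem_insert, Finset.mem_singleton] at hx
      rcases hx with h | rfl | rfl
      · exact hI.1 h
      · exact (mem_trap ..).2 (by omega)
      · exact (mem_trap ..).2 (by omega)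
    · rintro ⟨x, y⟩ hx ⟨z, w⟩ hz hle
      have hzP := (mem_trap ..).1 hz
      simp only [Finset.mem_union, Finset.mem_insert, Finset.mem_singleton,
        Prod.mk.injEq] at hx ⊢
      rw [Prod.mk_le_mk] at hle
      rcases hx with h | h | h
      · exact Or.inl (hI.2 _ h _ hz (by rw [Prod.mk_le_mk]; exact hle))
      · by_cases hw : w ≤ j
        · exact Or.inl (hI.2 _ h1 _ hz (by rw [Prod.mk_le_mk]; omega))
        · by_cases hzi : z = i
          · right; left; omega
          · rcases h4 with h4 | h4
            · omega
            · exact Or.inl (hI.2 _ h4 _ hz (by rw [Prod.mk_le_mk]; omega))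
      · by_cases hzj : z = j
        · right; right; omega
        · exact Or.inl (hI.2 _ h1 _ hz (by rw [Prod.mk_le_mk]; omega))

theorem pointwise (a b : ℤ) (hab : a ≤ b) (I : Finset (ℤ × ℤ))
    (hI : IsIdeal (trap a b) I) (j : ℤ) (hj : 2 ≤ j) (hja : j ≤ a) :
    ∑ i ∈ Finset.Icc (1 : ℤ) (j - 1), togPlus (trap a b) {(i, j + 1), (j, j)} I
      = togMinus (trap a b) {(j - 1, j)} I := by
  have hplus : ∀ i ∈ Finset.Icc (1 : ℤ) (j - 1),
      togPlus (trap a b) {(i, j + 1), (j, j)} I =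
      if ((j - 1, j) ∈ I ∧ (j, j) ∉ I ∧ (i, j + 1) ∉ I ∧ (i = 1 ∨ (i - 1, j + 1) ∈ I))
        then 1 else 0 := by
    intro i hi
    rw [Finset.mem_Icc] at hi
    unfold togPlus
    exact if_congr (plus_iff a b hab I hI i j hi.1 hi.2 hja) rfl rfl
  have hminus : togMinus (trap a b) {(j - 1, j)} I =
      if ((j - 1, j) ∈ I ∧ (j, j) ∉ I ∧ (j - 1, j + 1) ∉ I) then 1 else 0 := by
    unfold togMinus
    exact if_congr (minus_iff a b hab I hI j hj hja) rfl rfl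
  rw [Finset.sum_congr rfl hplus, hminus]
  -- membership in column j+1 is monotone
  have mono : ∀ x y : ℤ, 1 ≤ x → x ≤ y → (y, j + 1) ∈ I → (x, j + 1) ∈ I := by
    intro x y hx hxy h
    have hyP := (mem_trap ..).1 (hI.1 h)
    exact hI.2 _ h _ ((mem_trap ..).2 (by omega)) (by rw [Prod.mk_le_mk]; omega)
  split_ifs with h
  · obtain ⟨h1, h2, h3⟩ := h
    obtain ⟨m, ⟨hm1, hm2⟩, hmin⟩ := Int.exists_least_of_bdd
      (P := fun i => 1 ≤ i ∧ (i, j + 1) ∉ I) ⟨1, fun z hz => hz.1⟩ ⟨j - 1, by omega, h3⟩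
    have hmj := hmin (j - 1) ⟨by omega, h3⟩
    rw [Finset.sum_eq_single m]
    · rw [if_pos]
      refine ⟨h1, h2, hm2, ?_⟩
      by_cases hm : m = 1
      · exact Or.inl hm
      · right
        by_contra hc
        have := hmin (m - 1) ⟨by omega, hc⟩
        omega
    · intro i hi hne
      rw [Finset.mem_Icc] at hi
      rw [if_neg]
      rintro ⟨-, -, h5, h6⟩
      have := hmin i ⟨hi.1, h5⟩
      rcases h6 with h6 | h6
      · omega
      · exact hm2 (mono m (i - 1) hm1 (by omega) h6)
    · intro hm
      rw [Finset.mem_Icc] at hm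
      omega
  · refine Finset.sum_eq_zero fun i hi => ?_
    rw [Finset.mem_Icc] at hi
    rw [if_neg]
    rintro ⟨h1, h2, h3, -⟩
    exact h ⟨h1, h2, fun h4 => h3 (mono i (j - 1) hi.1 hi.2 h4)⟩

theorem pair_toggle_sum_eq_single (a b : ℤ) (ha : 1 ≤ a) (hab : a ≤ b)
    (μ : Finset (ℤ × ℤ) → ℝ) (hμ : IsDistribution (trap a b) μ)
    (hsym : ToggleAntichainSymmetric (trap a b) μ) :
    (∑ i ∈ Finset.Icc (1 : ℤ) (a - 1), ∑ j ∈ Finset.Icc (i + 1) a,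
        expect (trap a b) μ (togMinus (trap a b) {(i, j + 1), (j, j)}))
      = ∑ i ∈ Finset.Icc (1 : ℤ) (a - 1),
          expect (trap a b) μ (togMinus (trap a b) {(i, i + 1)}) := by
  have hpm : ∀ i ∈ Finset.Icc (1 : ℤ) (a - 1), ∀ j ∈ Finset.Icc (i + 1) a,
      expect (trap a b) μ (togMinus (trap a b) {(i, j + 1), (j, j)}) =
      expect (trap a b) μ (togPlus (trap a b) {(i, j + 1), (j, j)}) := by
    intro i hi j hj
    rw [Finset.mem_Icc] at hi hj
    have h := hsym {(i, j + 1), (j, j)} ?_ ?_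
    · simp only [expect, tog, mul_sub, Finset.sum_sub_distrib] at h ⊢
      linarith
    · intro x hx
      simp only [Finset.mem_insert, Finset.mem_singleton] at hx
      rcases hx with rfl | rfl
      · exact (mem_trap ..).2 (by omega)
      · exact (mem_trap ..).2 (by omega)
    · intro x hx y hy hne hle
      simp only [Finset.coe_insert, Finset.coe_singleton, Set.mem_insert_iff,
        Set.mem_singleton_iff] at hx hy
      rcases hx with rfl | rfl <;> rcases hy with rfl | rfl
      · exact hne rfl
      · rw [Prod.mk_le_mk] at hle; omega
      · rw [Prod.mk_le_mk] at hle; omega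
      · exact hne rfl
  rw [Finset.sum_congr rfl fun i hi => Finset.sum_congr rfl (hpm i hi)]
  rw [Finset.sum_comm' (t' := Finset.Icc 2 a) (s' := fun j => Finset.Icc 1 (j - 1))
    (by intro x y; simp only [Finset.mem_Icc]; omega)]
  refine Finset.sum_bij' (fun j _ => j - 1) (fun i _ => i + 1) ?_ ?_ ?_ ?_ ?_
  · intro j hj; rw [Finset.mem_Icc] at hj ⊢; omega
  · intro j hj; rw [Finset.mem_Icc] at hj ⊢; omega
  · intro j hj; omega
  · intro j hj; omega
  · intro j hj
    rw [Finset.mem_Icc] at hj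
    simp only [expect]
    rw [Finset.sum_comm]
    refine Finset.sum_congr rfl fun I hI => ?_
    rw [← Finset.mul_sum, pointwise a b hab I (Finset.mem_filter.1 hI).2 j hj.1 hj.2,
      sub_add_cancel]

end Stmt17
end
end

section
/- Fix n ≥ 2. Let Q be the poset D(2n−1, n) and let R be the poset D(2n−1, 1), where for 1 ≤ r ≤ m, D(m,r) is the poset on the set {(k,0) : 1 ≤ k ≤ m} ∪ {(r,1)} with (k,ε) ≤ (k',ε') iff k < k' or (k,ε) = (k',ε') (a chain of length m with the element at level r doubled into two incomparable elements). Then there exists a bijection φ : J(Q) → J(R) commuting with rowmotion: φ(row(I)) = row(φ(I)) for all I ∈ J(Q). (Q is the minuscule quadric poset Λ_{Q^{2n}} and R is the root poset Φ⁺_{I₂(2n)}.) -/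
/-!
STATEMENT 18: For `n ≥ 2` there is a rowmotion-equivariant bijection between
the order ideals of `Q = D(2n−1, n)` (the minuscule quadric poset `Λ_{Q^{2n}}`)
and those of `R = D(2n−1, 1)` (the root poset `Φ⁺_{I₂(2n)}`), where `D(m,r)`
is a chain of length `m` with the element at level `r` doubled.
-/

open scoped Classical

noncomputable section

namespace Stmt18

/-- The order on `D(m,r)`: `(k,ε) ≤ (k',ε')` iff `k < k'` or `(k,ε) = (k',ε')`. -/
def leD (p q : ℕ × ℕ) : Prop := p.1 < q.1 ∨ p = q

/-- The ground set of `D(m,r)`: `{(k,0) : 1 ≤ k ≤ m} ∪ {(r,1)}`. -/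
def Dposet (m r : ℕ) : Finset (ℕ × ℕ) :=
  ((Finset.Icc 1 m).image (fun k => (k, 0))) ∪ {(r, 1)}

/-- `I` is an order ideal of the poset with ground set `P` and order `leD`. -/
def IsIdeal (P I : Finset (ℕ × ℕ)) : Prop :=
  I ⊆ P ∧ ∀ x ∈ I, ∀ y ∈ P, leD y x → y ∈ I

/-- Rowmotion with respect to the order `leD` on the ground set `P`:
the order ideal generated by the minimal elements of `P \ I`. -/
def row (P I : Finset (ℕ × ℕ)) : Finset (ℕ × ℕ) :=
  P.filter (fun x => ∃ m ∈ P, m ∉ I ∧ (∀ y ∈ P, y ∉ I → leD y m → y = m) ∧ leD x m)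

theorem mem_D (m r : ℕ) (x : ℕ × ℕ) :
    x ∈ Dposet m r ↔ (1 ≤ x.1 ∧ x.1 ≤ m ∧ x.2 = 0) ∨ (x.1 = r ∧ x.2 = 1) := by
  obtain ⟨a, b⟩ := x
  simp only [Dposet, Finset.mem_union, Finset.mem_image, Finset.mem_Icc, Finset.mem_singleton,
    Prod.mk.injEq]
  constructor
  · rintro (⟨k, hk, rfl, rfl⟩ | h)
    · left; exact ⟨hk.1, hk.2, rfl⟩
    · right; exact h
  · rintro (h | h)
    · left; exact ⟨a, ⟨h.1, h.2.1⟩, rfl, h.2.2.symm⟩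
    · right; exact h

/-- Parametrisation of the ideals. -/
def enc (m r c : ℕ) : Finset (ℕ × ℕ) :=
  (Dposet m r).filter (fun x => (c ≤ m ∧ x.1 ≤ c) ∨ (m < c ∧ (x.1 < r ∨ x = (r, c - m - 1))))

/-- The action of rowmotion on parameters. -/
def stp (m c : ℕ) : ℕ :=
  if c < m then c + 1 else if c = m then 0 else if c = m + 1 then m + 2 else m + 1

theorem mem_enc (m r c : ℕ) (x : ℕ × ℕ) : x ∈ enc m r c ↔ x ∈ Dposet m r ∧
    ((c ≤ m ∧ x.1 ≤ c) ∨ (m < c ∧ (x.1 < r ∨ x = (r, c - m - 1)))) := by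
  simp [enc]

theorem stp_lt (m c : ℕ) : stp m c < m + 3 := by
  unfold stp; split_ifs <;> omega

theorem enc_bij (m r : ℕ) (hr : 1 ≤ r) (hm : r ≤ m) :
    Set.BijOn (enc m r) {c | c < m + 3} {I | IsIdeal (Dposet m r) I} := by
  refine ⟨?_, ?_, ?_⟩
  · intro c hc
    refine ⟨Finset.filter_subset _ _, ?_⟩
    rintro ⟨a, b⟩ hx ⟨a', b'⟩ hy hle
    simp only [mem_enc, mem_D, leD, Prod.mk.injEq] at *
    grind
  · intro c hc d hd h
    have key : ∀ x, x ∈ enc m r c ↔ x ∈ enc m r d := fun x => by rw [h]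
    simp only [Set.mem_ofPred_eq] at hc hd
    have h1 := key (r, 0)
    have h2 := key (r, 1)
    have h3 := key (c, 0)
    have h4 := key (d, 0)
    simp only [mem_enc, mem_D, Prod.mk.injEq] at h1 h2 h3 h4
    clear key h
    simp at h1 h2 h3 h4
    omega
  · rintro I ⟨hI, hd⟩
    by_cases h0 : (r, 0) ∈ I <;> by_cases h1 : (r, 1) ∈ I
    rotate_left
    · refine ⟨m + 1, by simp, ?_⟩
      ext ⟨a, b⟩
      have e1 := @hI (a, b)
      have e2 := hd (r, 0) h0 (a, b)
      have e3 := hd (a, b)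
      have e4 := fun h => e3 h (r, 1)
      simp only [mem_enc, mem_D, leD, Prod.mk.injEq] at *
      grind
    · refine ⟨m + 2, by simp, ?_⟩
      ext ⟨a, b⟩
      have e1 := @hI (a, b)
      have e2 := hd (r, 1) h1 (a, b)
      have e3 := hd (a, b)
      have e4 := fun h => e3 h (r, 0)
      simp only [mem_enc, mem_D, leD, Prod.mk.injEq] at *
      grind
    all_goals
      set k := Nat.findGreatest (fun k => (k, 0) ∈ I) m with hk
      have hkm : k ≤ m := Nat.findGreatest_le m
      have hz : k ≠ 0 → (k, 0) ∈ I := fun h => Nat.findGreatest_of_ne_zero hk.symm h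
      have hg : ∀ j, j ≤ m → (j, 0) ∈ I → j ≤ k := fun j hj h => Nat.le_findGreatest hj h
      have hrk := hg r hm
      clear_value k
      refine ⟨k, by simp; omega, ?_⟩
      ext ⟨a, b⟩
      have e1 := @hI (a, b)
      have e2 := fun h => hd (k, 0) (hz h) (a, b)
      have e5 := fun h => hd (k, 0) (hz h) (r, 0)
      have e6 := hg a
      simp only [mem_enc, mem_D, leD, Prod.mk.injEq] at *
      grind

theorem row_enc (m r c : ℕ) (hr : 1 ≤ r) (hm : r ≤ m) (hc : c < m + 3) :
    row (Dposet m r) (enc m r c) = enc m r (stp m c) := by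
  ext ⟨a, b⟩
  rw [row, Finset.mem_filter, mem_enc]
  refine and_congr_right fun hab => ?_
  constructor
  · rintro ⟨⟨u, v⟩, hu, hu', hmin, hle⟩
    have e1 := hmin (c + 1, 0)
    have e2 := hmin (r, 0)
    have e3 := hmin (r, 1)
    simp only [mem_enc, mem_D, leD, Prod.mk.injEq] at *
    clear hmin
    unfold stp
    simp at *
    split_ifs <;> omega
  · intro h
    have hcase : c < m ∨ c = m ∨ c = m + 1 ∨ c = m + 2 := by omega
    have w : ∃ u v, (u, v) ∈ Dposet m r ∧ (u, v) ∉ enc m r c ∧ leD (a, b) (u, v) ∧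
        ((c < m ∧ u = c + 1) ∨ (m < c ∧ u = r)) := by
      rcases hcase with hc | hc | hc | hc
      · by_cases ha : a = c + 1
        · refine ⟨a, b, hab, ?_⟩
          simp only [mem_enc, mem_D, leD, Prod.mk.injEq] at *
          grind
        · refine ⟨c + 1, 0, ?_⟩
          simp only [mem_enc, mem_D, leD, Prod.mk.injEq, stp] at *
          grind
      · simp only [mem_enc, mem_D, leD, Prod.mk.injEq, stp] at *
        grind
      · refine ⟨r, 1, ?_⟩
        simp only [mem_enc, mem_D, leD, Prod.mk.injEq, stp] at *
        grind
      · refine ⟨r, 0, ?_⟩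
        simp only [mem_enc, mem_D, leD, Prod.mk.injEq, stp] at *
        grind
    obtain ⟨u, v, h1, h2, h3, h4⟩ := w
    refine ⟨(u, v), h1, h2, ?_, h3⟩
    rintro ⟨p, q⟩ hp hq hl
    simp only [mem_enc, mem_D, leD, Prod.mk.injEq] at *
    grind

/-- There is a bijection `φ : J(D(2n−1,n)) → J(D(2n−1,1))` commuting with rowmotion. -/
theorem quadric_dihedral_rowmotion_equivariant_bijection (n : ℕ) (hn : 2 ≤ n) :
    ∃ φ : Finset (ℕ × ℕ) → Finset (ℕ × ℕ),
      Set.BijOn φ {I | IsIdeal (Dposet (2 * n - 1) n) I} {I | IsIdeal (Dposet (2 * n - 1) 1) I} ∧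
      ∀ I : Finset (ℕ × ℕ), IsIdeal (Dposet (2 * n - 1) n) I →
        φ (row (Dposet (2 * n - 1) n) I) = row (Dposet (2 * n - 1) 1) (φ I) := by
  set m := 2 * n - 1 with hm
  have hn1 : 1 ≤ n := by omega
  have hnm : n ≤ m := by omega
  have hm1 : 1 ≤ m := by omega
  have b1 := enc_bij m n hn1 hnm
  have b2 := enc_bij m 1 le_rfl hm1
  have inv := b1.invOn_invFunOn
  refine ⟨enc m 1 ∘ Function.invFunOn (enc m n) {c | c < m + 3},
    b2.comp (b1.symm inv.symm), ?_⟩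
  intro I hI
  obtain ⟨c, hc, rfl⟩ := b1.surjOn hI
  rw [row_enc m n c hn1 hnm hc]
  simp only [Function.comp]
  rw [inv.1 hc, inv.1 (stp_lt m c), row_enc m 1 c le_rfl hm1 hc]

end Stmt18
end
end
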